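/- arXiv:0810.5219 — 2 statements merged into one kernel-verified Lean document; each statement's English description precedes it below -/
import Mathlib

section
/- Let q ≥ 1 be an integer and let Q1, Q2, P1, P2 be real numbers with 0 ≤ P1, P2 ≤ q. Then the number Φ of pairs of integers (u, v) with Q1 < u ≤ Q1 + P1, Q2 < v ≤ Q2 + P2, and uv ≡ 1 (mod q), satisfies Φ = (φ(q)/q²)·P1·P2 + O(σ_0(q)·log²(q+1)·q^{1/2}), with an absolute implied constant. -/
/-- Number of integer points `(u,v)` in the box `(Q1, Q1+P1] × (Q2, Q2+P2]`
with `u v ≡ 1 (mod q)`. -/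
noncomputable def boxCount (q : ℕ) (Q1 Q2 P1 P2 : ℝ) : ℕ :=
  Set.ncard {p : ℤ × ℤ | Q1 < (p.1 : ℝ) ∧ (p.1 : ℝ) ≤ Q1 + P1 ∧
    Q2 < (p.2 : ℝ) ∧ (p.2 : ℝ) ≤ Q2 + P2 ∧ p.1 * p.2 ≡ 1 [ZMOD q]}

namespace Kloosterman

open Polynomial

section Stepanov

theorem sum_C_mul_X_pow_mul_ne_zero {F : Type*} [Field F] {N : ℕ} (s : Fin N → F) (hs : s ≠ 0)
    (V : Fin N → F[X]) (hV : ∀ e, (V e).coeff 0 ≠ 0) :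
    ∑ e, C (s e) * (X ^ (e : ℕ) * V e) ≠ 0 := by
  classical
  obtain ⟨e₁, he₁⟩ := Function.ne_iff.mp hs
  obtain ⟨e₀, he₀, hmin⟩ := Finset.exists_min_image (Finset.univ.filter fun e => s e ≠ 0) id
    ⟨e₁, by simpa using he₁⟩
  simp only [Finset.mem_filter, Finset.mem_univ, true_and, id] at he₀ hmin
  intro h
  have hc := congrArg (fun f => coeff f (e₀ : ℕ)) h
  simp only [finsetSum_coeff, coeff_C_mul, coeff_zero] at hc
  rw [Finset.sum_eq_single e₀] at hc
  · simp only [coeff_X_pow_mul', le_refl, if_true, Nat.sub_self, mul_eq_zero] at hc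
    exact hc.elim he₀ (hV e₀)
  · intro e _ hne
    by_cases hse : s e = 0
    · simp [hse]
    · have hlt : e₀ < e := lt_of_le_of_ne (hmin e hse) (Ne.symm hne)
      rw [coeff_X_pow_mul', if_neg (by exact_mod_cast not_le.mpr hlt), mul_zero]
  · simp

theorem exists_linear_relation {F : Type*} [Field F] {N M : ℕ} (hMN : M < N) (v : Fin N → F[X])
    (hv : ∀ e, v e ∈ degreeLT F M) :
    ∃ s : Fin N → F, s ≠ 0 ∧ ∑ e, C (s e) * v e = 0 := by
  have hdep : ¬ LinearIndependent F (fun e => (⟨v e, hv e⟩ : degreeLT F M)) := by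
    intro h
    have : FiniteDimensional F (degreeLT F M) :=
      FiniteDimensional.of_injective (degreeLTEquiv F M).toLinearMap (degreeLTEquiv F M).injective
    have := h.fintype_card_le_finrank
    rw [(degreeLTEquiv F M).finrank_eq] at this
    simp at this
    omega
  rw [Fintype.not_linearIndependent_iff] at hdep
  obtain ⟨g, hg, i, hi⟩ := hdep
  refine ⟨g, fun h => hi (by simp [h]), ?_⟩
  have := congrArg Subtype.val hg
  simpa [smul_eq_C_mul] using this

variable {p : ℕ} [Fact p.Prime]

/-- The polynomial `X ^ r * U`, where `r = p ^ μ` and `U = ∑ i ≤ μ, (a X + b X⁻¹) ^ (p ^ i)`. -/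
noncomputable def halfTrace (a b : ZMod p) (μ : ℕ) : (ZMod p)[X] :=
  ∑ i ∈ Finset.range (μ + 1), (C a * X ^ (p ^ μ + p ^ i) + C b * X ^ (p ^ μ - p ^ i))

theorem coeff_zero_halfTrace (a b : ZMod p) (μ : ℕ) : (halfTrace a b μ).coeff 0 = b := by
  have hp : 1 < p := (Fact.out : p.Prime).one_lt
  unfold halfTrace
  rw [Finset.sum_range_succ, coeff_add, finsetSum_coeff, Finset.sum_eq_zero]
  · have : p ^ μ ≠ 0 := by positivity
    have h2 : ¬ (0 = p ^ μ + p ^ μ) := by omega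
    simp [coeff_X_pow, h2]
  · intro i hi
    have h1 : p ^ i < p ^ μ := Nat.pow_lt_pow_right hp (Finset.mem_range.mp hi)
    have h2 : ¬ (0 = p ^ μ + p ^ i) := by omega
    have h3 : ¬ (0 = p ^ μ - p ^ i) := by omega
    simp only [coeff_add, coeff_C_mul, coeff_X_pow, if_neg h2, if_neg h3, mul_zero, add_zero]

theorem natDegree_halfTrace_le (a b : ZMod p) (μ : ℕ) :
    (halfTrace a b μ).natDegree ≤ 2 * p ^ μ := by
  have hp : 1 < p := (Fact.out : p.Prime).one_lt
  refine natDegree_sum_le_of_forall_le _ _ fun i hi => ?_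
  have h1 : p ^ i ≤ p ^ μ :=
    Nat.pow_le_pow_right hp.le (Nat.lt_succ_iff.mp (Finset.mem_range.mp hi))
  refine (natDegree_add_le _ _).trans (max_le ?_ ?_)
  · exact (natDegree_C_mul_X_pow_le _ _).trans (by omega)
  · exact (natDegree_C_mul_X_pow_le _ _).trans (by omega)

variable {L : Type*} [Field L] [Algebra (ZMod p) L]

theorem add_mul_inv_pow (a b : ZMod p) (x : L) (i : ℕ) :
    (algebraMap (ZMod p) L a * x + algebraMap (ZMod p) L b * x⁻¹) ^ p ^ i =
      algebraMap (ZMod p) L a * x ^ p ^ i + algebraMap (ZMod p) L b * (x ^ p ^ i)⁻¹ := by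
  have : CharP L p := charP_of_injective_algebraMap (algebraMap (ZMod p) L).injective p
  rw [add_pow_char_pow, mul_pow, mul_pow, ← map_pow, ← map_pow, ZMod.pow_card_pow,
    ZMod.pow_card_pow, inv_pow]

theorem aeval_halfTrace (a b : ZMod p) (μ : ℕ) {x : L} (hx : x ≠ 0) :
    aeval x (halfTrace a b μ) = x ^ p ^ μ * ∑ i ∈ Finset.range (μ + 1),
      (algebraMap (ZMod p) L a * x + algebraMap (ZMod p) L b * x⁻¹) ^ p ^ i := by
  have hp : 1 < p := (Fact.out : p.Prime).one_lt
  simp only [halfTrace, map_sum, Finset.mul_sum]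
  refine Finset.sum_congr rfl fun i hi => ?_
  have h1 : p ^ i ≤ p ^ μ :=
    Nat.pow_le_pow_right hp.le (Nat.lt_succ_iff.mp (Finset.mem_range.mp hi))
  rw [add_mul_inv_pow, map_add, map_mul, map_mul, aeval_C, aeval_C, map_pow, map_pow, aeval_X,
    pow_add, pow_sub₀ x hx h1]
  ring

theorem sum_pow_two_mul (a b : ZMod p) (μ : ℕ) (x : L) :
    ∑ i ∈ Finset.range (2 * (μ + 1)),
      (algebraMap (ZMod p) L a * x + algebraMap (ZMod p) L b * x⁻¹) ^ p ^ i =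
    (∑ i ∈ Finset.range (μ + 1),
      (algebraMap (ZMod p) L a * x + algebraMap (ZMod p) L b * x⁻¹) ^ p ^ i) +
    (∑ i ∈ Finset.range (μ + 1),
      (algebraMap (ZMod p) L a * x + algebraMap (ZMod p) L b * x⁻¹) ^ p ^ i) ^ p ^ (μ + 1) := by
  have : CharP L p := charP_of_injective_algebraMap (algebraMap (ZMod p) L).injective p
  rw [two_mul, Finset.sum_range_add, sum_pow_char_pow]
  congr 1
  refine Finset.sum_congr rfl fun i _ => ?_
  rw [← pow_mul, ← pow_add, add_comm i]

/-- Stepanov's method in Bombieri's form: a polynomial of small degree, built from a vanishing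
combination, which is zero at every point of the fibre. -/
theorem card_fiber_le [Fintype L] [DecidableEq L] (a b c : ZMod p) (hb : b ≠ 0) (μ : ℕ)
    (hL : Fintype.card L = p ^ (2 * (μ + 1))) :
    (Finset.univ.filter fun x : L => x ≠ 0 ∧
      ∑ i ∈ Finset.range (2 * (μ + 1)),
        (algebraMap (ZMod p) L a * x + algebraMap (ZMod p) L b * x⁻¹) ^ p ^ i =
          algebraMap (ZMod p) L c).card ≤ (p ^ μ + 6) * p ^ (μ + 1) := by
  have hp : 1 < p := (Fact.out : p.Prime).one_lt
  have : CharP L p := charP_of_injective_algebraMap (algebraMap (ZMod p) L).injective p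
  set r := p ^ μ with hr
  have hr0 : 0 < r := by positivity
  have hq : p ^ (μ + 1) = r * p := pow_succ p μ
  have hQ : Fintype.card L = (r * p) * (r * p) := by rw [hL, ← hq]; ring
  set W := halfTrace a b μ with hW
  let t : ℕ → ℕ := fun e => e / r % p
  let k : ℕ → ℕ := fun e => p - 1 - t e
  have ht : ∀ e, t e + k e = p - 1 := fun e => by
    have : t e < p := Nat.mod_lt _ (by omega)
    simp only [k]; omega
  set N := (r + 4) * (r * p) with hN
  set M := (r + 1) * (r * p) + (r + 4) with hM
  have hMN : M < N := by
    simp only [hM, hN]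
    nlinarith [Nat.mul_le_mul hr0 hp]
  let v : Fin N → (ZMod p)[X] := fun e =>
    X ^ (r * p * ((e : ℕ) % r) + (e : ℕ) / (r * p) + r * t e) * (C c * X ^ r - W) ^ k e
  have hdegW : W.natDegree ≤ 2 * r := natDegree_halfTrace_le a b μ
  have hv : ∀ e, v e ∈ degreeLT (ZMod p) M := by
    intro e
    rw [mem_degreeLT]
    refine lt_of_le_of_lt degree_le_natDegree ?_
    norm_cast
    have hd : (C c * X ^ r - W).natDegree ≤ 2 * r :=
      (natDegree_sub_le _ _).trans (max_le ((natDegree_C_mul_X_pow_le _ _).trans (by omega)) hdegW)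
    have h1 : (v e).natDegree ≤
        (r * p * ((e : ℕ) % r) + (e : ℕ) / (r * p) + r * t e) + k e * (2 * r) := by
      refine natDegree_mul_le.trans (add_le_add (natDegree_X_pow_le _) ?_)
      exact natDegree_pow_le.trans (Nat.mul_le_mul le_rfl hd)
    have h2 : (e : ℕ) % r + 1 ≤ r := Nat.mod_lt _ hr0
    have h3 : (e : ℕ) / (r * p) < r + 4 := by
      rw [Nat.div_lt_iff_lt_mul (by positivity)]; exact e.2
    have h4 := ht e
    have h5 : r * p * ((e : ℕ) % r) + r * p ≤ r * p * r := by
      calc _ = r * p * ((e : ℕ) % r + 1) := by ring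
        _ ≤ _ := Nat.mul_le_mul le_rfl h2
    have h6 : r * t e + k e * (2 * r) ≤ 2 * (r * p) := by
      calc r * t e + k e * (2 * r) ≤ 2 * r * (t e + k e) := by nlinarith [Nat.zero_le (r * t e)]
        _ ≤ 2 * r * p := Nat.mul_le_mul le_rfl (by omega)
        _ = _ := by ring
    have h7 : M = r * p * r + r * p + (r + 4) := by simp only [hM]; ring
    omega
  obtain ⟨s, hs, hrel⟩ := exists_linear_relation hMN v hv
  set G : (ZMod p)[X] := ∑ e : Fin N, C (s e) * (X ^ (e : ℕ) * W ^ k e) with hG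
  have hG0 : G ≠ 0 := by
    refine sum_C_mul_X_pow_mul_ne_zero s hs _ fun e => ?_
    rw [coeff_zero_eq_eval_zero, eval_pow, ← coeff_zero_eq_eval_zero, hW, coeff_zero_halfTrace]
    exact pow_ne_zero _ hb
  have hGdeg : G.natDegree ≤ (r + 6) * (r * p) := by
    refine natDegree_sum_le_of_forall_le _ _ fun e _ => ?_
    refine (natDegree_C_mul_le _ _).trans (natDegree_mul_le.trans ?_)
    have h1 : (W ^ k e).natDegree ≤ p * (2 * r) :=
      natDegree_pow_le.trans (Nat.mul_le_mul (by have := ht e; omega) hdegW)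
    have h2 : (X ^ (e : ℕ) : (ZMod p)[X]).natDegree ≤ (r + 4) * (r * p) :=
      (natDegree_X_pow_le _).trans e.2.le
    calc _ ≤ (r + 4) * (r * p) + p * (2 * r) := add_le_add h2 h1
      _ = _ := by ring
  have hroot : ∀ x : L, x ≠ 0 → ∑ i ∈ Finset.range (2 * (μ + 1)),
        (algebraMap (ZMod p) L a * x + algebraMap (ZMod p) L b * x⁻¹) ^ p ^ i =
          algebraMap (ZMod p) L c → aeval x G = 0 := by
    intro x hx hxc
    rw [sum_pow_two_mul] at hxc
    have hWx := aeval_halfTrace a b μ hx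
    rw [← hW, ← hr] at hWx
    set U := ∑ i ∈ Finset.range (μ + 1),
      (algebraMap (ZMod p) L a * x + algebraMap (ZMod p) L b * x⁻¹) ^ p ^ i with hU
    have hxQ : x ^ ((r * p) * (r * p)) = x := by rw [← hQ]; exact FiniteField.pow_card x
    have hUq : U ^ (r * p) = algebraMap (ZMod p) L c - U := by rw [← hq, ← hxc]; ring
    have hterm : ∀ e : Fin N, (aeval x (C (s e) * (X ^ (e : ℕ) * W ^ k e))) ^ p ^ (μ + 1) *
        x ^ (r * (p - 1)) = x ^ (r * (r * p) * (p - 1)) * aeval x (C (s e) * v e) := by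
      intro e
      have he : (e : ℕ) = (e : ℕ) % r + r * t e + (r * p) * ((e : ℕ) / (r * p)) := by
        have h1 := Nat.mod_add_div (e : ℕ) r
        have h2 := Nat.mod_add_div ((e : ℕ) / r) p
        rw [Nat.div_div_eq_div_mul] at h2
        calc (e : ℕ) = (e : ℕ) % r + r * ((e : ℕ) / r % p + p * ((e : ℕ) / (r * p))) := by
              rw [h2, h1]
          _ = _ := by simp only [t]; ring
      have h4 := ht e
      simp only [v, map_mul, map_pow, aeval_X, aeval_C, map_sub, hWx, mul_pow]
      rw [← map_pow, ZMod.pow_card_pow, hq, ← h4]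
      have e1 : (x ^ (e : ℕ)) ^ (r * p) = x ^ (r * p * ((e : ℕ) % r)) * x ^ (r * (r * p) * t e)
          * x ^ ((e : ℕ) / (r * p)) := by
        conv_lhs => rw [he]
        rw [← pow_mul, add_mul, add_mul, pow_add, pow_add]
        congr 1
        · congr 1 <;> congr 1 <;> ring
        · rw [show r * p * ((e : ℕ) / (r * p)) * (r * p) =
            (r * p * (r * p)) * ((e : ℕ) / (r * p)) by ring, pow_mul, hxQ]
      have e2 : (U ^ k e) ^ (r * p) = (algebraMap (ZMod p) L c - U) ^ k e := by
        rw [pow_right_comm, hUq]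
      have e3 : algebraMap (ZMod p) L c * x ^ r - x ^ r * U =
          x ^ r * (algebraMap (ZMod p) L c - U) := by ring
      rw [e1, e2, e3, mul_pow]
      ring
    have hsum : (aeval x G) ^ p ^ (μ + 1) * x ^ (r * (p - 1)) = 0 := by
      rw [hG, map_sum, sum_pow_char_pow, Finset.sum_mul, Finset.sum_congr rfl fun e _ => hterm e,
        ← Finset.mul_sum, ← map_sum, hrel, map_zero, mul_zero]
    rcases mul_eq_zero.mp hsum with h | h
    · exact pow_eq_zero_iff (by positivity) |>.mp h
    · exact absurd h (pow_ne_zero _ hx)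
  have hsub : (Finset.univ.filter fun x : L => x ≠ 0 ∧
      ∑ i ∈ Finset.range (2 * (μ + 1)),
        (algebraMap (ZMod p) L a * x + algebraMap (ZMod p) L b * x⁻¹) ^ p ^ i =
          algebraMap (ZMod p) L c) ⊆ (G.map (algebraMap (ZMod p) L)).roots.toFinset := by
    intro x hx
    simp only [Finset.mem_filter, Finset.mem_univ, true_and] at hx
    rw [Multiset.mem_toFinset, mem_roots (map_ne_zero hG0), IsRoot.def, eval_map_algebraMap]
    exact hroot x hx.1 hx.2
  calc _ ≤ _ := Finset.card_le_card hsub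
    _ ≤ _ := Multiset.toFinset_card_le _
    _ ≤ _ := card_roots' _
    _ = G.natDegree := natDegree_map _
    _ ≤ _ := by rw [hq]; exact hGdeg

end Stepanov

section EulerProduct

variable {p : ℕ} [Fact p.Prime]

/-- The completely multiplicative function on monic polynomials whose generating series is the
`L`-function of the Kloosterman sum. -/
noncomputable def polyChar (ψ : AddChar (ZMod p) ℂ) (a b : ZMod p) (f : (ZMod p)[X]) : ℂ :=
  if f.coeff 0 = 0 then 0 else ψ (-(a * f.nextCoeff) - b * (f.coeff 1 / f.coeff 0))

variable (ψ : AddChar (ZMod p) ℂ) (a b : ZMod p)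

theorem polyChar_one : polyChar ψ a b 1 = 1 := by
  have : (1 : (ZMod p)[X]).nextCoeff = 0 := by rw [← C_1, nextCoeff_C_eq_zero]
  simp [polyChar, this, coeff_one]

theorem polyChar_mul {f g : (ZMod p)[X]} (hf : f.Monic) (hg : g.Monic) :
    polyChar ψ a b (f * g) = polyChar ψ a b f * polyChar ψ a b g := by
  unfold polyChar
  rw [mul_coeff_zero, hf.nextCoeff_mul hg]
  by_cases h1 : f.coeff 0 = 0
  · simp [h1]
  by_cases h2 : g.coeff 0 = 0
  · simp [h2]
  rw [if_neg (mul_ne_zero h1 h2), if_neg h1, if_neg h2, ← AddChar.map_add_eq_mul]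
  congr 1
  have : (f * g).coeff 1 = f.coeff 0 * g.coeff 1 + f.coeff 1 * g.coeff 0 := by
    rw [coeff_mul, Finset.Nat.sum_antidiagonal_eq_sum_range_succ_mk]
    simp [Finset.sum_range_succ]
  rw [this]
  field_simp
  ring

theorem polyChar_pow {f : (ZMod p)[X]} (hf : f.Monic) (j : ℕ) :
    polyChar ψ a b (f ^ j) = polyChar ψ a b f ^ j := by
  induction j with
  | zero => simp [polyChar_one]
  | succ j ih => rw [pow_succ, polyChar_mul ψ a b (hf.pow j) hf, ih, pow_succ]

variable (p) in
theorem finite_monic_natDegree (d : ℕ) :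
    {f : (ZMod p)[X] | f.Monic ∧ f.natDegree = d}.Finite := by
  have : Finite (degreeLT (ZMod p) d) := Finite.of_equiv _ (degreeLTEquiv (ZMod p) d).toEquiv.symm
  exact Set.finite_coe_iff.mp (Finite.of_equiv _ (monicEquivDegreeLT d).symm)

variable (p) in
/-- The monic polynomials of degree `d` over `ZMod p`. -/
noncomputable def monics (d : ℕ) : Finset (ZMod p)[X] := (finite_monic_natDegree p d).toFinset

theorem mem_monics {d : ℕ} {f : (ZMod p)[X]} : f ∈ monics p d ↔ f.Monic ∧ f.natDegree = d := by
  simp [monics]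

open Classical in
variable (p) in
/-- The monic irreducible polynomials of degree at most `d` over `ZMod p`. -/
noncomputable def primes (d : ℕ) : Finset (ZMod p)[X] :=
  ((Finset.range (d + 1)).biUnion (monics p)).filter Irreducible

theorem mem_primes {d : ℕ} {f : (ZMod p)[X]} :
    f ∈ primes p d ↔ f.Monic ∧ f.natDegree ≤ d ∧ Irreducible f := by
  simp only [primes, Finset.mem_filter, Finset.mem_biUnion, Finset.mem_range, mem_monics]
  constructor
  · rintro ⟨⟨i, hi, h1, h2⟩, h3⟩
    exact ⟨h1, by omega, h3⟩
  · rintro ⟨h1, h2, h3⟩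
    exact ⟨⟨_, by omega, h1, rfl⟩, h3⟩

/-- The coefficients of the `L`-function. -/
noncomputable def coeffL (d : ℕ) : ℂ := ∑ f ∈ monics p d, polyChar ψ a b f

/-- The sum of the von Mangoldt function times `polyChar` over monic prime powers of degree `k`. -/
noncomputable def mangoldtSum (d k : ℕ) : ℂ :=
  ∑ P ∈ primes p d, ∑ j ∈ Finset.Icc 1 d,
    if j * P.natDegree = k then (P.natDegree : ℂ) * polyChar ψ a b P ^ j else 0

open Classical in
theorem natDegree_eq_sum_prime_powers {d : ℕ} {f : (ZMod p)[X]} (hf : f ∈ monics p d) :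
    ∑ P ∈ primes p d, ∑ j ∈ Finset.Icc 1 d, (if P ^ j ∣ f then P.natDegree else 0) = d := by
  obtain ⟨hm, hd⟩ := mem_monics.mp hf
  have hf0 : f ≠ 0 := hm.ne_zero
  set s := UniqueFactorizationMonoid.normalizedFactors f with hs
  have hmonic : ∀ P ∈ s, P.Monic := fun P hP => by
    rw [← UniqueFactorizationMonoid.normalize_normalized_factor P hP]
    exact monic_normalize (UniqueFactorizationMonoid.irreducible_of_normalized_factor P hP).ne_zero
  have hprod : s.prod = f := by
    rw [hs, UniqueFactorizationMonoid.prod_normalizedFactors_eq hf0, hm.normalize_eq_self]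
  have hsum : (s.map natDegree).sum = d := by
    rw [← hd, ← hprod, natDegree_multiset_prod_of_monic _ hmonic]
  have hsub : s.toFinset ⊆ primes p d := by
    intro P hP
    rw [Multiset.mem_toFinset] at hP
    refine mem_primes.mpr ⟨hmonic P hP, ?_,
      UniqueFactorizationMonoid.irreducible_of_normalized_factor P hP⟩
    rw [← hd]
    exact natDegree_le_of_dvd (UniqueFactorizationMonoid.dvd_of_mem_normalizedFactors hP) hf0
  rw [Finset.sum_multiset_map_count, Finset.sum_subset hsub] at hsum
  · conv_rhs => rw [← hsum]
    refine Finset.sum_congr rfl fun P hP => ?_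
    obtain ⟨hPm, hPd, hPi⟩ := mem_primes.mp hP
    have hdvd : ∀ j, P ^ j ∣ f ↔ j ≤ s.count P := fun j => by
      rw [UniqueFactorizationMonoid.dvd_iff_normalizedFactors_le_normalizedFactors
        (pow_ne_zero _ hPm.ne_zero) hf0, hPi.normalizedFactors_pow, hPm.normalize_eq_self,
        Multiset.le_count_iff_replicate_le]
    have hcount : s.count P ≤ d := by
      have h1 : P ^ s.count P ∣ f := (hdvd _).mpr le_rfl
      have h2 := natDegree_le_of_dvd h1 hf0
      rw [natDegree_pow, hd] at h2
      have := hPi.natDegree_pos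
      nlinarith
    simp only [hdvd]
    rw [← Finset.sum_filter, Finset.sum_const, smul_eq_mul, smul_eq_mul]
    congr 1
    have : (Finset.Icc 1 d).filter (fun j => j ≤ s.count P) = Finset.Icc 1 (s.count P) := by
      ext j; simp only [Finset.mem_filter, Finset.mem_Icc]; omega
    rw [this, Nat.card_Icc, Nat.add_sub_cancel]
  · intro P _ hP
    rw [Multiset.mem_toFinset] at hP
    simp [Multiset.count_eq_zero_of_notMem hP]

open Classical in
theorem sum_monics_dvd {d n : ℕ} {P : (ZMod p)[X]} (hP : P.Monic) (hn : P.natDegree = n) :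
    ∑ f ∈ monics p d, (if P ∣ f then polyChar ψ a b f else 0) =
      if n ≤ d then polyChar ψ a b P * coeffL ψ a b (d - n) else 0 := by
  split_ifs with hnd
  · rw [← Finset.sum_filter, coeffL, Finset.mul_sum]
    symm
    refine Finset.sum_bij (fun g _ => P * g) ?_ ?_ ?_ ?_
    · intro g hg
      obtain ⟨h1, h2⟩ := mem_monics.mp hg
      rw [Finset.mem_filter, mem_monics]
      refine ⟨⟨hP.mul h1, ?_⟩, dvd_mul_right _ _⟩
      rw [hP.natDegree_mul h1]; omega
    · intro g _ g' _ h
      exact mul_left_cancel₀ hP.ne_zero h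
    · intro f hf
      rw [Finset.mem_filter, mem_monics] at hf
      obtain ⟨⟨h1, h2⟩, g, rfl⟩ := hf
      have hg : g.Monic := hP.of_mul_monic_left h1
      refine ⟨g, mem_monics.mpr ⟨hg, ?_⟩, rfl⟩
      rw [hP.natDegree_mul hg] at h2; omega
    · intro g hg
      rw [polyChar_mul ψ a b hP (mem_monics.mp hg).1]
  · refine Finset.sum_eq_zero fun f hf => if_neg fun h => hnd ?_
    obtain ⟨h1, h2⟩ := mem_monics.mp hf
    rw [← h2, ← hn]
    exact natDegree_le_of_dvd h h1.ne_zero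

/-- Newton's identities for the `L`-function, from unique factorization. -/
theorem mul_coeffL_eq (d : ℕ) :
    (d : ℂ) * coeffL ψ a b d =
      ∑ k ∈ Finset.Icc 1 d, mangoldtSum ψ a b d k * coeffL ψ a b (d - k) := by
  classical
  have h1 : (d : ℂ) * coeffL ψ a b d = ∑ f ∈ monics p d, ∑ P ∈ primes p d, ∑ j ∈ Finset.Icc 1 d,
      (P.natDegree : ℂ) * (if P ^ j ∣ f then polyChar ψ a b f else 0) := by
    rw [coeffL, Finset.mul_sum]
    refine Finset.sum_congr rfl fun f hf => ?_
    conv_lhs => rw [← natDegree_eq_sum_prime_powers hf]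
    push_cast
    simp only [Finset.sum_mul, ite_mul, zero_mul, mul_ite, mul_zero]
  have h2 : ∀ P ∈ primes p d, ∀ j ∈ Finset.Icc 1 d,
      ∑ f ∈ monics p d, (P.natDegree : ℂ) * (if P ^ j ∣ f then polyChar ψ a b f else 0) =
      ∑ k ∈ Finset.Icc 1 d, (if j * P.natDegree = k then
        (P.natDegree : ℂ) * polyChar ψ a b P ^ j else 0) * coeffL ψ a b (d - k) := by
    intro P hP j hj
    obtain ⟨hPm, hPd, hPi⟩ := mem_primes.mp hP
    have hpos : 1 ≤ j * P.natDegree :=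
      Nat.mul_pos (Finset.mem_Icc.mp hj).1 hPi.natDegree_pos
    rw [← Finset.mul_sum, sum_monics_dvd ψ a b (hPm.pow j) (hPm.natDegree_pow j),
      polyChar_pow ψ a b hPm]
    simp only [ite_mul, zero_mul]
    rw [Finset.sum_ite_eq]
    simp only [Finset.mem_Icc, hpos, true_and]
    split_ifs <;> ring
  rw [h1, Finset.sum_comm]
  simp only [mangoldtSum, Finset.sum_mul]
  rw [Finset.sum_comm (s := Finset.Icc 1 d)]
  refine Finset.sum_congr rfl fun P hP => ?_
  rw [Finset.sum_comm (s := monics p d)]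
  conv_rhs => rw [Finset.sum_comm]
  exact Finset.sum_congr rfl fun j hj => h2 P hP j hj

theorem coeffL_zero : coeffL ψ a b 0 = 1 := by
  have : monics p 0 = {1} := by
    ext f
    rw [mem_monics, Finset.mem_singleton]
    exact ⟨fun h => (Monic.degree_le_zero_iff_eq_one h.1).mp
      (natDegree_eq_zero_iff_degree_le_zero.mp h.2), fun h => by simp [h]⟩
  rw [coeffL, this, Finset.sum_singleton, polyChar_one]

theorem exists_map_ne_one {ψ : AddChar (ZMod p) ℂ} (hψ : ψ ≠ 1) {a : ZMod p} (ha : a ≠ 0) :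
    ∃ t, ψ (a * t) ≠ 1 := by
  obtain ⟨t, ht⟩ := AddChar.ne_one_iff.mp hψ
  exact ⟨a⁻¹ * t, by rwa [mul_inv_cancel_left₀ ha]⟩

theorem coeffL_eq_zero {ψ : AddChar (ZMod p) ℂ} (hψ : ψ ≠ 1) {a : ZMod p} (ha : a ≠ 0)
    {d : ℕ} (hd : 3 ≤ d) : coeffL ψ a b d = 0 := by
  obtain ⟨t, ht⟩ := exists_map_ne_one hψ (neg_ne_zero.mpr ha)
  have hdeg : ∀ u : ZMod p, ∀ f ∈ monics p d, f + C u * X ^ (d - 1) ∈ monics p d := by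
    intro u f hf
    obtain ⟨h1, h2⟩ := mem_monics.mp hf
    have hlt : (C u * X ^ (d - 1) : (ZMod p)[X]).degree < f.degree := by
      rw [degree_eq_natDegree h1.ne_zero, h2]
      refine (degree_C_mul_X_pow_le _ _).trans_lt ?_
      exact_mod_cast (by omega : d - 1 < d)
    refine mem_monics.mpr ⟨h1.add_of_left hlt, ?_⟩
    rw [natDegree_add_eq_left_of_degree_lt hlt, h2]
  have hshift : coeffL ψ a b d = ψ (-a * t) * coeffL ψ a b d := by
    conv_lhs => rw [coeffL]
    rw [coeffL, Finset.mul_sum]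
    symm
    refine Finset.sum_bij' (fun f _ => f + C t * X ^ (d - 1)) (fun f _ => f + C (-t) * X ^ (d - 1))
      (hdeg t) (hdeg (-t)) ?_ ?_ ?_
    · intro f _; simp
    · intro f _; simp
    · intro f hf
      obtain ⟨h1, h2⟩ := mem_monics.mp hf
      obtain ⟨h3, h4⟩ := mem_monics.mp (hdeg t f hf)
      have c0 : (f + C t * X ^ (d - 1)).coeff 0 = f.coeff 0 := by
        rw [coeff_add, coeff_C_mul, coeff_X_pow, if_neg (by omega), mul_zero, add_zero]
      have c1 : (f + C t * X ^ (d - 1)).coeff 1 = f.coeff 1 := by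
        rw [coeff_add, coeff_C_mul, coeff_X_pow, if_neg (by omega), mul_zero, add_zero]
      have cn : (f + C t * X ^ (d - 1)).nextCoeff = f.nextCoeff + t := by
        rw [nextCoeff_of_natDegree_pos (by omega), nextCoeff_of_natDegree_pos (by omega), h2, h4,
          coeff_add, coeff_C_mul, coeff_X_pow_self, mul_one]
      unfold polyChar
      rw [c0, c1, cn]
      split_ifs
      · simp
      · rw [← AddChar.map_add_eq_mul]
        congr 1
        ring
  have : (ψ (-a * t) - 1) * coeffL ψ a b d = 0 := by rw [sub_mul, ← hshift, one_mul, sub_self]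
  exact (mul_eq_zero.mp this).resolve_left (sub_ne_zero.mpr ht)

theorem coeffL_two {ψ : AddChar (ZMod p) ℂ} (hψ : ψ ≠ 1) {a b : ZMod p} (ha : a ≠ 0)
    (hb : b ≠ 0) : coeffL ψ a b 2 = p := by
  have h1 : coeffL ψ a b 2 = ∑ t : ZMod p, ∑ s : ZMod p,
      polyChar ψ a b (X ^ 2 + C s * X + C t) := by
    rw [← Finset.sum_product', coeffL]
    symm
    refine Finset.sum_bij (fun v _ => X ^ 2 + C v.2 * X + C v.1) ?_ ?_ ?_ ?_
    · intro v _
      rw [mem_monics, show (X ^ 2 + C v.2 * X + C v.1 : (ZMod p)[X]) =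
        C 1 * X ^ 2 + C v.2 * X + C v.1 by simp]
      exact ⟨leadingCoeff_quadratic one_ne_zero, natDegree_quadratic one_ne_zero⟩
    · intro v _ w _ h
      have h0 := congrArg (fun f => coeff f 0) h
      have h1 := congrArg (fun f => coeff f 1) h
      simp [coeff_X, coeff_C] at h0 h1
      exact Prod.ext h0 h1
    · intro f hf
      obtain ⟨hm, hd⟩ := mem_monics.mp hf
      refine ⟨(f.coeff 0, f.coeff 1), by simp, ?_⟩
      conv_rhs => rw [hm.as_sum, hd]
      simp [Finset.sum_range_succ]
      ring
    · intro v _; rfl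
  have h2 : ∀ s t : ZMod p, polyChar ψ a b (X ^ 2 + C s * X + C t) =
      if t = 0 then 0 else ψ (s * (-(a + b / t))) := by
    intro s t
    have hn : (X ^ 2 + C s * X + C t : (ZMod p)[X]).nextCoeff = s := by
      have hd : (X ^ 2 + C s * X + C t : (ZMod p)[X]).natDegree = 2 := by
        rw [show (X ^ 2 + C s * X + C t : (ZMod p)[X]) =
          C 1 * X ^ 2 + C s * X + C t by simp]
        exact natDegree_quadratic one_ne_zero
      rw [nextCoeff_of_natDegree_pos (by omega), hd]
      simp [coeff_C]
    unfold polyChar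
    rw [hn]
    have c0 : (X ^ 2 + C s * X + C t : (ZMod p)[X]).coeff 0 = t := by simp
    have c1 : (X ^ 2 + C s * X + C t : (ZMod p)[X]).coeff 1 = s := by simp [coeff_C]
    rw [c0, c1]
    refine if_congr Iff.rfl rfl (congrArg ψ ?_)
    ring
  have hprim : ψ.IsPrimitive := AddChar.IsPrimitive.of_ne_one hψ
  rw [h1]
  simp only [h2]
  have h3 : ∀ t : ZMod p, ∑ s : ZMod p, (if t = 0 then 0 else ψ (s * (-(a + b / t)))) =
      if t = -b / a then (p : ℂ) else 0 := by
    intro t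
    by_cases ht : t = 0
    · have : ¬ (0 = -b / a) := fun h => (div_ne_zero (neg_ne_zero.mpr hb) ha) h.symm
      simp [ht, this]
    · simp only [if_neg ht]
      rw [AddChar.sum_mulShift _ hprim, ZMod.card]
      have : -(a + b / t) = 0 ↔ t = -b / a := by
        rw [neg_eq_zero, eq_div_iff ha]
        field_simp
        constructor
        · intro h; linear_combination h
        · intro h; linear_combination h
      simp only [this]
      split_ifs <;> simp
  simp only [h3]
  simp

end EulerProduct

section ExtensionSum

variable {p : ℕ} [Fact p.Prime]

/-- The Kloosterman sum over a finite extension `L` of `ZMod p`. -/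
noncomputable def extSum (ψ : AddChar (ZMod p) ℂ) (a b : ZMod p) (L : Type*) [Field L] [Fintype L]
    [DecidableEq L] [Algebra (ZMod p) L] : ℂ :=
  ∑ x : Lˣ, ψ (Algebra.trace (ZMod p) L
    (algebraMap (ZMod p) L a * x + algebraMap (ZMod p) L b * (x : L)⁻¹))

variable {L : Type*} [Field L] [Fintype L] [Algebra (ZMod p) L]

open IntermediateField in
theorem adjoin_simple_inv (F : Type*) {L : Type*} [Field F] [Field L] [Algebra F L] (x : L) :
    F⟮x⁻¹⟯ = F⟮x⟯ := by
  refine le_antisymm ?_ ?_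
  · exact adjoin_simple_le_iff.mpr (inv_mem (mem_adjoin_simple_self F x))
  · refine adjoin_simple_le_iff.mpr ?_
    have := inv_mem (mem_adjoin_simple_self F x⁻¹)
    rwa [inv_inv] at this

theorem minpoly_inv {F L : Type*} [Field F] [Field L] [Algebra F L] [FiniteDimensional F L]
    {x : L} (hx : x ≠ 0) :
    minpoly F x⁻¹ = C ((minpoly F x).coeff 0)⁻¹ * (minpoly F x).reverse := by
  have hint : IsIntegral F x := Algebra.IsIntegral.isIntegral x
  have hint' : IsIntegral F x⁻¹ := Algebra.IsIntegral.isIntegral x⁻¹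
  have h0 : (minpoly F x).coeff 0 ≠ 0 := minpoly.coeff_zero_ne_zero hint hx
  have hm : (C ((minpoly F x).coeff 0)⁻¹ * (minpoly F x).reverse).Monic := by
    refine monic_C_mul_of_mul_leadingCoeff_eq_one ?_
    rw [reverse_leadingCoeff, trailingCoeff_eq_coeff_zero h0, inv_mul_cancel₀ h0]
  have hdvd : minpoly F x⁻¹ ∣ C ((minpoly F x).coeff 0)⁻¹ * (minpoly F x).reverse := by
    refine minpoly.dvd _ _ ?_
    rw [map_mul]
    have : aeval x⁻¹ (minpoly F x).reverse = 0 := by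
      let _ : Invertible x := invertibleOfNonzero hx
      have h := eval₂_reverse_eq_zero_iff (algebraMap F L) x (minpoly F x)
      rw [invOf_eq_inv] at h
      exact h.mpr (minpoly.aeval F x)
    rw [this, mul_zero]
  refine (eq_of_monic_of_dvd_of_natDegree_le (minpoly.monic hint') hm hdvd ?_).symm
  rw [natDegree_C_mul (inv_ne_zero h0)]
  refine (reverse_natDegree_le _).trans ?_
  rw [← IntermediateField.adjoin.finrank hint, ← IntermediateField.adjoin.finrank hint',
    adjoin_simple_inv]

theorem map_trace_eq_polyChar_pow (ψ : AddChar (ZMod p) ℂ) (a b : ZMod p) {x : L} (hx : x ≠ 0) :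
    ψ (Algebra.trace (ZMod p) L
      (algebraMap (ZMod p) L a * x + algebraMap (ZMod p) L b * x⁻¹)) =
    polyChar ψ a b (minpoly (ZMod p) x) ^
      (Module.finrank (ZMod p) L / (minpoly (ZMod p) x).natDegree) := by
  have hint : IsIntegral (ZMod p) x := Algebra.IsIntegral.isIntegral x
  have hpos := minpoly.natDegree_pos hint
  have h0 : (minpoly (ZMod p) x).coeff 0 ≠ 0 := minpoly.coeff_zero_ne_zero hint hx
  have hn : Module.finrank (ZMod p) L / (minpoly (ZMod p) x).natDegree =
      Module.finrank (IntermediateField.adjoin (ZMod p) {x}) L := by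
    rw [← IntermediateField.adjoin.finrank hint,
      ← Module.finrank_mul_finrank (ZMod p) (IntermediateField.adjoin (ZMod p) {x}) L]
    exact Nat.mul_div_cancel_left _ Module.finrank_pos
  have hinv : (minpoly (ZMod p) x⁻¹).nextCoeff =
      (minpoly (ZMod p) x).coeff 1 / (minpoly (ZMod p) x).coeff 0 := by
    have hr : (minpoly (ZMod p) x).reverse.natDegree = (minpoly (ZMod p) x).natDegree := by
      rw [reverse_natDegree, natTrailingDegree_eq_zero.mpr (Or.inr h0), Nat.sub_zero]
    rw [minpoly_inv hx, nextCoeff_C_mul, nextCoeff_of_natDegree_pos (by omega), hr, coeff_reverse,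
      revAt_le (Nat.sub_le _ _), Nat.sub_sub_self hpos, inv_mul_eq_div]
  rw [map_add, ← Algebra.smul_def, ← Algebra.smul_def, map_smul, map_smul,
    trace_eq_finrank_mul_minpoly_nextCoeff, trace_eq_finrank_mul_minpoly_nextCoeff, hinv,
    adjoin_simple_inv, hn, polyChar, if_neg h0, ← AddChar.map_nsmul_eq_pow]
  congr 1
  simp only [smul_eq_mul, nsmul_eq_mul]
  ring

open Classical in
theorem card_minpoly_eq {P : (ZMod p)[X]} (hP : P.Monic) (hPi : Irreducible P) :
    (Finset.univ.filter fun x : L => minpoly (ZMod p) x = P).card =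
      if P.natDegree ∣ Module.finrank (ZMod p) L then P.natDegree else 0 := by
  split_ifs with hdvd
  · have h1 : P ∣ X ^ (Nat.card (ZMod p)) ^ (Module.finrank (ZMod p) L) - X :=
      hPi.natDegree_dvd_iff_dvd_X_pow_card_pow_sub_X.mp hdvd
    have hcard : (Nat.card (ZMod p)) ^ (Module.finrank (ZMod p) L) = Fintype.card L := by
      rw [← Nat.card_eq_fintype_card, Module.natCard_eq_pow_finrank (K := ZMod p) (V := L)]
    rw [hcard] at h1
    have hs : (P.map (algebraMap (ZMod p) L)).Splits := by
      refine Splits.of_dvd (FiniteField.splits_X_pow_card_sub_X p (K := L)) ?_ ?_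
      · exact map_ne_zero
          (FiniteField.X_pow_card_sub_X_ne_zero (ZMod p) (Fintype.one_lt_card (α := L)))
      · exact map_dvd (mapRingHom (algebraMap (ZMod p) L)) h1
    rw [← card_rootSet_eq_natDegree (PerfectField.separable_of_irreducible hPi) hs,
      ← Set.toFinset_card]
    congr 1
    ext x
    simp only [Finset.mem_filter, Finset.mem_univ, true_and, Set.mem_toFinset,
      mem_rootSet_of_ne hP.ne_zero]
    constructor
    · rintro rfl; exact minpoly.aeval _ _
    · intro h; exact (minpoly.eq_of_irreducible_of_monic hPi h hP).symm
  · rw [Finset.card_eq_zero, Finset.filter_eq_empty_iff]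
    rintro x - rfl
    exact hdvd (minpoly.degree_dvd (Algebra.IsIntegral.isIntegral x))

theorem extSum_eq_mangoldtSum [DecidableEq L] (ψ : AddChar (ZMod p) ℂ) (a b : ZMod p) {d : ℕ}
    (hd : Module.finrank (ZMod p) L ≤ d) :
    extSum ψ a b L = mangoldtSum ψ a b d (Module.finrank (ZMod p) L) := by
  classical
  set k := Module.finrank (ZMod p) L with hk
  have hk0 : 0 < k := Module.finrank_pos
  have h1 : extSum ψ a b L = ∑ x : L, polyChar ψ a b (minpoly (ZMod p) x) ^
      (k / (minpoly (ZMod p) x).natDegree) := by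
    rw [← Finset.add_sum_erase _ _ (Finset.mem_univ (0 : L))]
    have : polyChar ψ a b (minpoly (ZMod p) (0 : L)) ^
        (k / (minpoly (ZMod p) (0 : L)).natDegree) = 0 := by
      rw [minpoly.zero, natDegree_X, Nat.div_one, polyChar, if_pos (by simp),
        zero_pow hk0.ne']
    rw [this, zero_add, extSum]
    refine Finset.sum_bij (fun x _ => (x : L)) ?_ ?_ ?_ ?_
    · intro x _; simp
    · intro x _ y _ h; exact Units.ext h
    · intro x hx
      exact ⟨Units.mk0 x (Finset.ne_of_mem_erase hx), Finset.mem_univ _, rfl⟩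
    · intro x _; exact map_trace_eq_polyChar_pow ψ a b x.ne_zero
  rw [h1, mangoldtSum, ← Finset.sum_fiberwise_of_maps_to (t := primes p d)
    (g := fun x : L => minpoly (ZMod p) x)]
  · refine Finset.sum_congr rfl fun P hP => ?_
    obtain ⟨hPm, hPd, hPi⟩ := mem_primes.mp hP
    have hpos := hPi.natDegree_pos
    rw [Finset.sum_congr rfl (g := fun _ => polyChar ψ a b P ^ (k / P.natDegree))
      (fun x hx => by rw [(Finset.mem_filter.mp hx).2]), Finset.sum_const, card_minpoly_eq hPm hPi]
    split_ifs with hdvd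
    · obtain ⟨j, hj⟩ := hdvd
      rw [← hk] at hj
      have hjd : k / P.natDegree = j := by rw [hj]; exact Nat.mul_div_cancel_left _ hpos
      have hj0 : 0 < j := Nat.pos_of_ne_zero fun h => by simp [h] at hj; omega
      rw [hjd, Finset.sum_eq_single j]
      · rw [if_pos (by rw [hj, mul_comm]), nsmul_eq_mul]
      · intro i _ hij
        refine if_neg fun h => hij ?_
        rw [hj, mul_comm] at h
        exact Nat.eq_of_mul_eq_mul_left hpos h
      · intro h
        refine absurd (Finset.mem_Icc.mpr ⟨hj0, ?_⟩) h
        nlinarith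
    · rw [zero_smul, Finset.sum_eq_zero]
      intro j _
      exact if_neg fun h => hdvd ⟨j, by rw [← hk, ← h, mul_comm]⟩
  · intro x _
    have hint : IsIntegral (ZMod p) x := Algebra.IsIntegral.isIntegral x
    refine mem_primes.mpr ⟨minpoly.monic hint, ?_, minpoly.irreducible hint⟩
    exact (Nat.le_of_dvd hk0 (minpoly.degree_dvd hint)).trans hd

theorem norm_extSum_le [DecidableEq L] {ψ : AddChar (ZMod p) ℂ} (hψ : ψ ≠ 1)
    (a : ZMod p) {b : ZMod p}
    (hb : b ≠ 0) (μ : ℕ) (hL : Module.finrank (ZMod p) L = 2 * (μ + 1)) :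
    ‖extSum ψ a b L‖ ≤ 6 * p * p ^ (μ + 1) + 1 := by
  classical
  have hcard : Fintype.card L = p ^ (2 * (μ + 1)) := by
    rw [← Nat.card_eq_fintype_card, Module.natCard_eq_pow_finrank (K := ZMod p), hL,
      Nat.card_zmod]
  let T : Lˣ → ZMod p := fun x => Algebra.trace (ZMod p) L
    (algebraMap (ZMod p) L a * x + algebraMap (ZMod p) L b * (x : L)⁻¹)
  let n : ZMod p → ℕ := fun c => (Finset.univ.filter fun x => T x = c).card
  set B : ℕ := (p ^ μ + 6) * p ^ (μ + 1) with hB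
  have hn : ∀ c, n c ≤ B := by
    intro c
    refine le_trans ?_ (card_fiber_le (L := L) a b c hb μ hcard)
    refine Finset.card_le_card_of_injOn (fun x => (x : L)) ?_ (fun x _ y _ h => Units.ext h)
    intro x hx
    simp only [Finset.coe_filter, Finset.mem_univ, true_and, Set.mem_ofPred_eq] at hx ⊢
    refine ⟨x.ne_zero, ?_⟩
    rw [← hx, FiniteField.algebraMap_trace_eq_sum_pow, hL, Nat.card_zmod]
  have hsum : ∑ c, n c = p ^ (2 * (μ + 1)) - 1 := by
    rw [← hcard, ← Fintype.card_units, ← Finset.card_univ]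
    exact (Finset.card_eq_sum_card_fiberwise fun x _ => Finset.mem_univ (T x)).symm
  have h1 : extSum ψ a b L = -∑ c, ((B : ℂ) - n c) * ψ c := by
    have : extSum ψ a b L = ∑ c, (n c : ℂ) * ψ c := by
      rw [extSum, ← Finset.sum_fiberwise (g := T)]
      refine Finset.sum_congr rfl fun c _ => ?_
      rw [Finset.sum_congr rfl (g := fun _ => ψ c)
        (fun x hx => by rw [← (Finset.mem_filter.mp hx).2]), Finset.sum_const, nsmul_eq_mul]
    simp only [sub_mul, Finset.sum_sub_distrib, ← Finset.mul_sum, AddChar.sum_eq_zero_of_ne_one hψ]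
    rw [this]; ring
  rw [h1, norm_neg]
  calc ‖∑ c, ((B : ℂ) - n c) * ψ c‖ ≤ ∑ c, ‖((B : ℂ) - n c) * ψ c‖ := norm_sum_le _ _
    _ = ∑ c, ((B : ℝ) - n c) := by
      refine Finset.sum_congr rfl fun c _ => ?_
      rw [norm_mul, AddChar.norm_apply, mul_one, ← Nat.cast_sub (hn c), Complex.norm_natCast,
        Nat.cast_sub (hn c)]
    _ = p * B - (p ^ (2 * (μ + 1)) - 1) := by
      have h0 : 1 ≤ p ^ (2 * (μ + 1)) := Nat.one_le_pow _ _ (Fact.out : p.Prime).pos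
      have h2 : ∑ c, (n c : ℝ) = (p : ℝ) ^ (2 * (μ + 1)) - 1 := by
        rw [← Nat.cast_sum, hsum, Nat.cast_sub h0]; push_cast; rfl
      rw [Finset.sum_sub_distrib, h2]
      simp [ZMod.card]
    _ ≤ _ := by
      rw [hB]; push_cast
      apply le_of_eq
      ring

end ExtensionSum

section WeilBound

theorem norm_le_sqrt_of_power_sums {P C : ℝ} (hP : 1 ≤ P) {α β : ℂ} (hαβ : ‖α‖ * ‖β‖ = P)
    (h : ∀ μ : ℕ, ‖α ^ (2 * (μ + 1)) + β ^ (2 * (μ + 1))‖ ≤ C * P ^ (μ + 1)) :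
    ‖α‖ ≤ √P := by
  by_contra! hlt
  have hP0 : 0 < P := by linarith
  have hα : P < ‖α‖ ^ 2 := by
    have := Real.sq_sqrt hP0.le
    have h0 := Real.sqrt_nonneg P
    nlinarith
  have hα0 : 0 < ‖α‖ := (Real.sqrt_nonneg P).trans_lt hlt
  have hβ : ‖β‖ ^ 2 ≤ P := by
    have h1 : ‖α‖ ^ 2 * ‖β‖ ^ 2 = P * P := by rw [← hαβ]; ring
    have h2 : P * ‖β‖ ^ 2 ≤ ‖α‖ ^ 2 * ‖β‖ ^ 2 := by gcongr
    rw [h1] at h2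
    exact le_of_mul_le_mul_left h2 hP0
  obtain ⟨n, hn⟩ := pow_unbounded_of_one_lt (C + 1) ((one_lt_div hP0).mpr hα)
  have h1 : (‖α‖ ^ 2) ^ (n + 1) ≤ (C + 1) * P ^ (n + 1) := by
    have h2 : ‖α ^ (2 * (n + 1))‖ ≤
        ‖α ^ (2 * (n + 1)) + β ^ (2 * (n + 1))‖ + ‖β ^ (2 * (n + 1))‖ := by
      simpa using norm_sub_le (α ^ (2 * (n + 1)) + β ^ (2 * (n + 1))) (β ^ (2 * (n + 1)))
    rw [norm_pow, norm_pow β, pow_mul, pow_mul ‖β‖] at h2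
    have h3 : (‖β‖ ^ 2) ^ (n + 1) ≤ P ^ (n + 1) := by gcongr
    linarith [h n]
  have h2 : (‖α‖ ^ 2 / P) ^ (n + 1) ≤ C + 1 := by
    rw [div_pow, div_le_iff₀ (by positivity)]; exact h1
  have h3 : (‖α‖ ^ 2 / P) ^ n ≤ (‖α‖ ^ 2 / P) ^ (n + 1) :=
    pow_le_pow_right₀ ((one_lt_div hP0).mpr hα).le (Nat.le_succ n)
  linarith

theorem exists_power_sums (S : ℕ → ℂ) (P : ℂ) (h2 : 2 * P = S 1 * S 1 + S 2)
    (h : ∀ n, S (n + 3) = -(S (n + 2) * S 1 + S (n + 1) * P)) :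
    ∃ α β : ℂ, α * β = P ∧ ∀ n, 1 ≤ n → S n = -(α ^ n + β ^ n) := by
  obtain ⟨D, hD⟩ := IsAlgClosed.exists_eq_mul_self (S 1 ^ 2 - 4 * P)
  refine ⟨(-S 1 + D) / 2, (-S 1 - D) / 2, ?_, ?_⟩
  · linear_combination hD / 4
  · have hs : ∀ n, S (n + 1) = -(((-S 1 + D) / 2) ^ (n + 1) + ((-S 1 - D) / 2) ^ (n + 1)) ∧
        S (n + 2) = -(((-S 1 + D) / 2) ^ (n + 2) + ((-S 1 - D) / 2) ^ (n + 2)) := by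
      intro n
      induction n with
      | zero =>
        constructor
        · ring
        · linear_combination -h2 - hD / 2
      | succ n ih =>
        refine ⟨ih.2, ?_⟩
        rw [h n]
        set α := (-S 1 + D) / 2 with hα
        set β := (-S 1 - D) / 2 with hβ
        have e1 : S 1 = -(α + β) := by rw [hα, hβ]; ring
        have e2 : P = α * β := by rw [hα, hβ]; linear_combination -hD / 4
        rw [ih.1, ih.2, e2]
        generalize S 1 = s at e1
        rw [e1]
        ring
    intro n hn
    obtain ⟨m, rfl⟩ : ∃ m, n = m + 1 := ⟨n - 1, by omega⟩
    exact (hs m).1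

variable {p : ℕ} [Fact p.Prime]

/-- **Weil's bound** for Kloosterman sums over a prime field. -/
theorem norm_sum_units_prime_le {ψ : AddChar (ZMod p) ℂ} (hψ : ψ ≠ 1) {a b : ZMod p}
    (ha : a ≠ 0) (hb : b ≠ 0) :
    ‖∑ x : (ZMod p)ˣ, ψ (a * x + b * (x⁻¹ : (ZMod p)ˣ))‖ ≤ 2 * √p := by
  classical
  let _ : ∀ n, Fintype (GaloisField p n) := fun n => Fintype.ofFinite _
  have hp : 1 ≤ (p : ℝ) := by exact_mod_cast (Fact.out : p.Prime).one_lt.le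
  let S : ℕ → ℂ := fun n => extSum ψ a b (GaloisField p n)
  have hS : ∀ k d, 1 ≤ k → k ≤ d → mangoldtSum ψ a b d k = S k := by
    intro k d hk hkd
    have hf : Module.finrank (ZMod p) (GaloisField p k) = k := GaloisField.finrank p (by omega)
    have := extSum_eq_mangoldtSum (L := GaloisField p k) ψ a b (d := d) (by omega)
    rw [hf] at this
    exact this.symm
  have hnewton : ∀ d : ℕ, (d : ℂ) * coeffL ψ a b d =
      ∑ k ∈ Finset.Icc 1 d, S k * coeffL ψ a b (d - k) := by
    intro d
    rw [mul_coeffL_eq]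
    refine Finset.sum_congr rfl fun k hk => ?_
    rw [Finset.mem_Icc] at hk
    rw [hS k d hk.1 hk.2]
  have e1 : coeffL ψ a b 1 = S 1 := by
    have := hnewton 1
    simpa [coeffL_zero] using this
  have h2 : 2 * (p : ℂ) = S 1 * S 1 + S 2 := by
    have := hnewton 2
    rw [coeffL_two hψ ha hb, Finset.sum_Icc_succ_top (by norm_num)] at this
    simpa [coeffL_zero, e1] using this
  have h3 : ∀ n, S (n + 3) = -(S (n + 2) * S 1 + S (n + 1) * p) := by
    intro n
    have := hnewton (n + 3)
    rw [coeffL_eq_zero b hψ ha (by omega), mul_zero, Finset.sum_Icc_succ_top (by omega),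
      Finset.sum_Icc_succ_top (by omega), Finset.sum_Icc_succ_top (by omega),
      Finset.sum_eq_zero] at this
    · rw [show n + 3 - (n + 1) = 2 by omega, show n + 3 - (n + 1 + 1) = 1 by omega,
        show n + 3 - (n + 2 + 1) = 0 by omega, coeffL_zero, e1, coeffL_two hψ ha hb] at this
      linear_combination -this
    · intro k hk
      rw [Finset.mem_Icc] at hk
      rw [coeffL_eq_zero b hψ ha (by omega), mul_zero]
  obtain ⟨α, β, hαβ, hpow⟩ := exists_power_sums S p h2 h3
  have hbound : ∀ μ : ℕ, ‖α ^ (2 * (μ + 1)) + β ^ (2 * (μ + 1))‖ ≤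
      (6 * p + 1) * (p : ℝ) ^ (μ + 1) := by
    intro μ
    have h4 := norm_extSum_le (L := GaloisField p (2 * (μ + 1))) hψ a hb μ
      (GaloisField.finrank p (by omega))
    have h5 := hpow (2 * (μ + 1)) (by omega)
    rw [← norm_neg, ← h5]
    have h6 : 1 ≤ (p : ℝ) ^ (μ + 1) := one_le_pow₀ hp
    calc _ ≤ _ := h4
      _ ≤ _ := by linarith
  have hn : ‖α‖ * ‖β‖ = p := by rw [← norm_mul, hαβ, Complex.norm_natCast]
  have hα := norm_le_sqrt_of_power_sums hp hn hbound
  have hβ := norm_le_sqrt_of_power_sums hp ((mul_comm _ _).trans hn)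
    (fun μ => by rw [add_comm]; exact hbound μ)
  have hfinal : ∑ x : (ZMod p)ˣ, ψ (a * x + b * (x⁻¹ : (ZMod p)ˣ)) = S 1 := by
    have h7 := extSum_eq_mangoldtSum (L := ZMod p) ψ a b (d := 1) (by simp)
    rw [Module.finrank_self, hS 1 1 le_rfl le_rfl] at h7
    rw [← h7, extSum]
    refine Finset.sum_congr rfl fun x _ => ?_
    rw [Algebra.trace_self_apply]
    simp only [Algebra.algebraMap_self, RingHom.id_apply, Units.val_inv_eq_inv_val]
  rw [hfinal, hpow 1 le_rfl, norm_neg, pow_one, pow_one]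
  linarith [norm_add_le α β]

end WeilBound

section General

/-- The Kloosterman sum attached to an additive character of a finite commutative ring. -/
noncomputable def kloosterman {R : Type*} [CommRing R] [Fintype Rˣ] (ψ : AddChar R ℂ)
    (m n : R) : ℂ :=
  ∑ x : Rˣ, ψ (m * x + n * (x⁻¹ : Rˣ))

theorem norm_kloosterman_le_card {R : Type*} [CommRing R] [Finite R] [Fintype Rˣ]
    (ψ : AddChar R ℂ) (m n : R) : ‖kloosterman ψ m n‖ ≤ Fintype.card Rˣ := by
  refine (norm_sum_le _ _).trans (le_of_eq ?_)
  simp [AddChar.norm_apply]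

theorem kloosterman_comm {R : Type*} [CommRing R] [Fintype Rˣ] (ψ : AddChar R ℂ) (m n : R) :
    kloosterman ψ m n = kloosterman ψ n m := by
  refine Fintype.sum_equiv (Equiv.inv Rˣ) _ _ fun x => ?_
  rw [Equiv.inv_apply, inv_inv, add_comm]

/-- A Kloosterman sum to a coprime product of moduli factors. -/
theorem exists_kloosterman_mul {q₁ q₂ : ℕ} [NeZero q₁] [NeZero q₂] (h : q₁.Coprime q₂)
    {ψ : AddChar (ZMod (q₁ * q₂)) ℂ} (hψ : ψ.IsPrimitive) :
    ∃ (ψ₁ : AddChar (ZMod q₁) ℂ) (ψ₂ : AddChar (ZMod q₂) ℂ), ψ₁.IsPrimitive ∧ ψ₂.IsPrimitive ∧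
      ∀ m n : ℕ, kloosterman ψ m n = kloosterman ψ₁ m n * kloosterman ψ₂ m n := by
  set e := ZMod.chineseRemainder h
  let ψ₁ : AddChar (ZMod q₁) ℂ :=
    ψ.compAddMonoidHom (e.symm.toAddMonoidHom.comp (AddMonoidHom.inl _ _))
  let ψ₂ : AddChar (ZMod q₂) ℂ :=
    ψ.compAddMonoidHom (e.symm.toAddMonoidHom.comp (AddMonoidHom.inr _ _))
  have h₁ : ∀ x, ψ₁ x = ψ (e.symm (x, 0)) := fun x => rfl
  have h₂ : ∀ x, ψ₂ x = ψ (e.symm (0, x)) := fun x => rfl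
  refine ⟨ψ₁, ψ₂, ?_, ?_, fun m n => ?_⟩
  · intro a ha hne
    refine hψ (a := e.symm (a, 0)) (by simpa using ha) ?_
    ext x
    have := DFunLike.congr_fun hne (e x).1
    rw [AddChar.mulShift_apply, h₁] at this
    rw [AddChar.mulShift_apply, ← e.symm_apply_apply x, ← map_mul]
    simpa [Prod.mul_def] using this
  · intro a ha hne
    refine hψ (a := e.symm (0, a)) (by simpa using ha) ?_
    ext x
    have := DFunLike.congr_fun hne (e x).2
    rw [AddChar.mulShift_apply, h₂] at this
    rw [AddChar.mulShift_apply, ← e.symm_apply_apply x, ← map_mul]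
    simpa [Prod.mul_def] using this
  · rw [kloosterman, kloosterman, kloosterman, Finset.sum_mul_sum, ← Fintype.sum_prod_type']
    refine Fintype.sum_equiv
      ((Units.mapEquiv e.toMulEquiv).trans MulEquiv.prodUnits).toEquiv _ _ fun x => ?_
    rw [h₁, h₂, ← AddChar.map_add_eq_mul, ← map_add]
    congr 1
    apply e.injective
    rw [e.apply_symm_apply]
    ext <;> simp <;> rfl

/-- Multiplying the argument of a primitive character by a divisor of the modulus yields
a primitive character to the complementary modulus. -/
theorem exists_isPrimitive_mul_left {q d r : ℕ} [NeZero q] [NeZero r] (h : q = d * r)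
    {ψ : AddChar (ZMod q) ℂ} (hψ : ψ.IsPrimitive) :
    ∃ ψ' : AddChar (ZMod r) ℂ, ψ'.IsPrimitive ∧
      ∀ x, ψ (d * x) = ψ' (ZMod.castHom (h ▸ dvd_mul_left r d) (ZMod r) x) := by
  have key : ∀ n : ℕ, ψ d ^ n = ψ ((d * n : ℕ) : ZMod q) := by
    intro n
    rw [← AddChar.map_nsmul_eq_pow, nsmul_eq_mul]
    push_cast
    rw [mul_comm]
  have hζ : ψ d ^ r = 1 := by
    rw [key, ← h, ZMod.natCast_self, AddChar.map_zero_eq_one]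
  refine ⟨AddChar.zmodChar r hζ, ?_, fun x => ?_⟩
  · refine AddChar.zmod_char_primitive_of_eq_one_only_at_zero _ _ fun a ha => ?_
    rw [← ZMod.natCast_zmod_val a, AddChar.zmodChar_apply', key,
      hψ.zmod_char_eq_one_iff, ZMod.natCast_eq_zero_iff] at ha
    have hd : 0 < d := Nat.pos_of_ne_zero fun hd => NeZero.ne q (by rw [h, hd, zero_mul])
    nth_rewrite 1 [h] at ha
    rw [← ZMod.natCast_zmod_val a, ZMod.natCast_eq_zero_iff]
    exact Nat.dvd_of_mul_dvd_mul_left hd ha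
  · rw [← ZMod.natCast_zmod_val x, map_natCast (ZMod.castHom _ (ZMod r)),
      AddChar.zmodChar_apply', key, Nat.cast_mul]

theorem sum_comp_of_surjective {G H : Type*} [Group G] [Group H] [Fintype G] [Fintype H]
    (φ : G →* H) (hφ : Function.Surjective φ) (f : H → ℂ) :
    (Fintype.card H : ℂ) * ∑ g, f (φ g) = Fintype.card G * ∑ h, f h := by
  classical
  have hcard : ∀ h : H, ({g | φ g = h} : Finset G).card = ({g | φ g = 1} : Finset G).card :=
    fun h => MonoidHom.card_fiber_eq_of_mem_range φ (hφ h) (hφ 1)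
  have hG : Fintype.card G = Fintype.card H * ({g | φ g = 1} : Finset G).card := by
    rw [← Finset.card_univ, Finset.card_eq_sum_card_fiberwise (f := φ) (t := Finset.univ)
      (fun _ _ => Finset.mem_coe.mpr (Finset.mem_univ _)), Finset.sum_congr rfl fun h _ => hcard h]
    simp
  rw [← Finset.sum_fiberwise' Finset.univ φ f]
  simp_rw [Finset.sum_const, hcard, nsmul_eq_mul, ← Finset.mul_sum]
  rw [hG]
  push_cast
  ring

theorem kloosterman_mul_left {q d r : ℕ} [NeZero q] [NeZero r] (h : q = d * r)
    {ψ : AddChar (ZMod q) ℂ} (hψ : ψ.IsPrimitive) :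
    ∃ ψ' : AddChar (ZMod r) ℂ, ψ'.IsPrimitive ∧ ∀ m n : ℕ,
      (r.totient : ℂ) * kloosterman ψ (d * m : ℕ) (d * n : ℕ) =
        q.totient * kloosterman ψ' m n := by
  obtain ⟨ψ', hψ', hmul⟩ := exists_isPrimitive_mul_left h hψ
  refine ⟨ψ', hψ', fun m n => ?_⟩
  have hdvd : r ∣ q := h ▸ dvd_mul_left r d
  have := sum_comp_of_surjective (ZMod.unitsMap hdvd) (ZMod.unitsMap_surjective hdvd)
    (fun x => ψ' (m * x + n * (x⁻¹ : (ZMod r)ˣ)))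
  rw [ZMod.card_units_eq_totient, ZMod.card_units_eq_totient] at this
  rw [kloosterman, kloosterman, ← this]
  congr 1
  refine Finset.sum_congr rfl fun x _ => ?_
  rw [← map_inv, ZMod.unitsMap_val, ZMod.unitsMap_val]
  have h1 := hmul (m * x + n * (x⁻¹ : (ZMod q)ˣ))
  rw [map_add (ZMod.castHom _ (ZMod r)), map_mul (ZMod.castHom _ (ZMod r)),
    map_mul (ZMod.castHom _ (ZMod r)), map_natCast (ZMod.castHom _ (ZMod r)),
    map_natCast (ZMod.castHom _ (ZMod r)), ZMod.castHom_apply, ZMod.castHom_apply] at h1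
  rw [← h1]
  congr 1
  push_cast
  ring

end General

section StationaryPhase

variable {R : Type*} [CommRing R] [Fintype R] [DecidableEq R]

/-- The unit `1 + c z` when `c` is nilpotent of order at most three. -/
def onePlus {c : R} (hc : c ^ 3 = 0) (z : R) : Rˣ where
  val := 1 + c * z
  inv := 1 - c * z + c ^ 2 * z ^ 2
  val_inv := by linear_combination z ^ 3 * hc
  inv_val := by linear_combination z ^ 3 * hc

/-- The stationary points of `m y + n / y` at scale `d`. -/
def stationary (d m n : R) : Finset Rˣ := {y | d * (m * y - n * (y⁻¹ : Rˣ)) = 0}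

theorem mem_stationary {d m n : R} {y : Rˣ} :
    y ∈ stationary d m n ↔ d * (m * y - n * (y⁻¹ : Rˣ)) = 0 := by
  simp [stationary]

theorem kloosterman_eq_sum_stationary {ψ : AddChar R ℂ} (hψ : ψ.IsPrimitive) {d : R}
    (hd : d ^ 2 = 0) (m n : R) :
    kloosterman ψ m n = ∑ y ∈ stationary d m n, ψ (m * y + n * (y⁻¹ : Rˣ)) := by
  have hd3 : d ^ 3 = 0 := by rw [pow_succ, hd, zero_mul]
  have hshift : ∀ z : R, kloosterman ψ m n =
      ∑ y : Rˣ, ψ (m * y + n * (y⁻¹ : Rˣ)) * ψ (z * (d * (m * y - n * (y⁻¹ : Rˣ)))) := by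
    intro z
    rw [kloosterman, ← Equiv.sum_comp (Equiv.mulRight (onePlus hd3 z))]
    refine Finset.sum_congr rfl fun y _ => ?_
    rw [← AddChar.map_add_eq_mul]
    congr 1
    simp only [Equiv.coe_mulRight, mul_inv, Units.val_mul, onePlus, Units.inv_mk]
    linear_combination n * (y⁻¹ : Rˣ) * z ^ 2 * hd
  have hsum : (Fintype.card R : ℂ) * kloosterman ψ m n = Fintype.card R *
      ∑ y ∈ stationary d m n, ψ (m * y + n * (y⁻¹ : Rˣ)) := by
    calc (Fintype.card R : ℂ) * kloosterman ψ m n = ∑ _z : R, kloosterman ψ m n := by simp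
      _ = ∑ z : R, ∑ y : Rˣ, ψ (m * y + n * (y⁻¹ : Rˣ)) *
          ψ (z * (d * (m * y - n * (y⁻¹ : Rˣ)))) := Finset.sum_congr rfl fun z _ => hshift z
      _ = ∑ y : Rˣ, ψ (m * y + n * (y⁻¹ : Rˣ)) *
          ∑ z : R, ψ (z * (d * (m * y - n * (y⁻¹ : Rˣ)))) := by
        rw [Finset.sum_comm]
        simp_rw [Finset.mul_sum]
      _ = _ := by
        simp_rw [AddChar.sum_mulShift _ hψ]
        rw [stationary, Finset.sum_filter, Finset.mul_sum]
        refine Finset.sum_congr rfl fun y _ => ?_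
        split_ifs <;> simp [mul_comm]
  exact mul_left_cancel₀ (Nat.cast_ne_zero.mpr Fintype.card_ne_zero) hsum

theorem norm_kloosterman_le_card_stationary {ψ : AddChar R ℂ} (hψ : ψ.IsPrimitive) {d : R}
    (hd : d ^ 2 = 0) (m n : R) : ‖kloosterman ψ m n‖ ≤ (stationary d m n).card := by
  rw [kloosterman_eq_sum_stationary hψ hd]
  refine (norm_sum_le _ _).trans (le_of_eq ?_)
  simp [AddChar.norm_apply]

theorem norm_sum_quadratic_sq_le {ψ : AddChar R ℂ} (hψ : ψ.IsPrimitive) (w c : R) :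
    ‖∑ z, ψ (w * z + c * z ^ 2)‖ ^ 2 ≤
      Fintype.card R * ({h | 2 * c * h = 0} : Finset R).card := by
  have hsq : (∑ z, ψ (w * z + c * z ^ 2)) * (starRingEnd ℂ) (∑ z, ψ (w * z + c * z ^ 2)) =
      ∑ h, ψ (w * h + c * h ^ 2) * ∑ z, ψ (z * (2 * c * h)) := by
    rw [map_sum, Finset.sum_mul_sum, Finset.sum_comm]
    simp_rw [Finset.mul_sum]
    rw [Finset.sum_comm (γ := R) (f := fun h z => ψ (w * h + c * h ^ 2) * ψ (z * (2 * c * h)))]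
    refine Finset.sum_congr rfl fun z _ => ?_
    rw [← Equiv.sum_comp (Equiv.addRight z)]
    refine Finset.sum_congr rfl fun h _ => ?_
    rw [← AddChar.map_neg_eq_conj, ← AddChar.map_add_eq_mul, ← AddChar.map_add_eq_mul,
      Equiv.coe_addRight]
    congr 1
    ring
  have hnorm : ‖∑ z, ψ (w * z + c * z ^ 2)‖ ^ 2 =
      ‖∑ h, ψ (w * h + c * h ^ 2) * ∑ z, ψ (z * (2 * c * h))‖ := by
    rw [← hsq, norm_mul, RCLike.norm_conj, sq]
  rw [hnorm]
  refine (norm_sum_le _ _).trans ?_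
  simp_rw [AddChar.sum_mulShift _ hψ, norm_mul, AddChar.norm_apply, one_mul,
    Complex.norm_natCast]
  rw [← Nat.cast_sum, ← Nat.cast_mul, Nat.cast_le, Finset.card_filter, Finset.mul_sum]
  exact Finset.sum_le_sum fun h _ => by split_ifs <;> simp

theorem card_mul_norm_kloosterman_le {ψ : AddChar R ℂ} (hψ : ψ.IsPrimitive) {c d : R}
    (hd : d ^ 2 = 0) (hc : c ^ 3 = 0) (hcd : d * c = 0) (m n : R) :
    Fintype.card R * ‖kloosterman ψ m n‖ ≤ ∑ y ∈ stationary d m n,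
      ‖∑ z, ψ (c * (m * y - n * (y⁻¹ : Rˣ)) * z + c ^ 2 * n * (y⁻¹ : Rˣ) * z ^ 2)‖ := by
  have hmem : ∀ (z : R) (y : Rˣ), y * onePlus hc z ∈ stationary d m n ↔
      y ∈ stationary d m n := by
    intro z y
    rw [mem_stationary, mem_stationary]
    simp only [mul_inv, Units.val_mul, onePlus, Units.inv_mk]
    have : d * (m * (y * (1 + c * z)) - n * ((y⁻¹ : Rˣ) * (1 - c * z + c ^ 2 * z ^ 2))) =
        d * (m * y - n * (y⁻¹ : Rˣ)) := by
      linear_combination (m * y * z + n * (y⁻¹ : Rˣ) * z - n * (y⁻¹ : Rˣ) * z ^ 2 * c) * hcd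
    rw [this]
  have hshift : ∀ z : R, kloosterman ψ m n = ∑ y ∈ stationary d m n,
      ψ (m * y + n * (y⁻¹ : Rˣ)) *
        ψ (c * (m * y - n * (y⁻¹ : Rˣ)) * z + c ^ 2 * n * (y⁻¹ : Rˣ) * z ^ 2) := by
    intro z
    rw [kloosterman_eq_sum_stationary hψ hd]
    symm
    refine Finset.sum_equiv (Equiv.mulRight (onePlus hc z)) (fun y => (hmem z y).symm)
      fun y _ => ?_
    rw [← AddChar.map_add_eq_mul]
    congr 1
    simp only [Equiv.coe_mulRight, mul_inv, Units.val_mul, onePlus, Units.inv_mk]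
    ring
  have hsum : (Fintype.card R : ℂ) * kloosterman ψ m n = ∑ y ∈ stationary d m n,
      ψ (m * y + n * (y⁻¹ : Rˣ)) *
        ∑ z, ψ (c * (m * y - n * (y⁻¹ : Rˣ)) * z + c ^ 2 * n * (y⁻¹ : Rˣ) * z ^ 2) := by
    calc (Fintype.card R : ℂ) * kloosterman ψ m n = ∑ _z : R, kloosterman ψ m n := by simp
      _ = _ := by
        rw [Finset.sum_congr rfl fun z _ => hshift z, Finset.sum_comm]
        simp_rw [Finset.mul_sum]
  calc Fintype.card R * ‖kloosterman ψ m n‖ = ‖(Fintype.card R : ℂ) * kloosterman ψ m n‖ := by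
        rw [norm_mul, Complex.norm_natCast]
    _ ≤ _ := by
        rw [hsum]
        refine (norm_sum_le _ _).trans (Finset.sum_le_sum fun y _ => ?_)
        rw [norm_mul, AddChar.norm_apply, one_mul]

theorem card_filter_mul_eq_zero_le {q : ℕ} [NeZero q] {c : ℕ} (hc : 0 < c) :
    ({t | (c : ZMod q) * t = 0} : Finset (ZMod q)).card ≤ c := by
  have hdvd : ∀ t ∈ ({t | (c : ZMod q) * t = 0} : Finset (ZMod q)), q ∣ c * t.val := by
    intro t ht
    rw [Finset.mem_filter] at ht
    rw [← ZMod.natCast_eq_zero_iff]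
    push_cast
    rw [ZMod.natCast_zmod_val]
    exact ht.2
  have hq : 0 < q := Nat.pos_of_ne_zero (NeZero.ne q)
  refine (Finset.card_le_card_of_injOn (t := Finset.range c) (fun t => c * t.val / q) ?_ ?_).trans
    (Finset.card_range c).le
  · intro t _
    simp only [Finset.coe_range, Set.mem_Iio]
    rw [Nat.div_lt_iff_lt_mul hq]
    exact Nat.mul_lt_mul_of_pos_left (ZMod.val_lt t) hc
  · intro t ht u hu h
    have h1 : c * t.val = c * u.val :=
      (Nat.div_left_inj (hdvd t ht) (hdvd u hu)).mp h
    exact ZMod.val_injective q (Nat.eq_of_mul_eq_mul_left hc h1)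

theorem pow_dvd_or_of_dvd_mul {p : ℕ} (hp : p.Prime) {l : ℕ} {A B Y : ℤ} (hAB : A + B = 2 * Y)
    (hY : ¬ (p : ℤ) ∣ Y) (h : (p : ℤ) ^ l ∣ A * B) :
    (p : ℤ) ^ l ∣ Nat.gcd 2 p * A ∨ (p : ℤ) ^ l ∣ Nat.gcd 2 p * B := by
  have hp' : Prime (p : ℤ) := Nat.prime_iff_prime_int.mp hp
  by_cases hA : (p : ℤ) ∣ A
  swap
  · exact Or.inr ((hp'.pow_dvd_of_dvd_mul_left l hA h).mul_left _)
  by_cases hB : (p : ℤ) ∣ B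
  swap
  · exact Or.inl ((hp'.pow_dvd_of_dvd_mul_right l hB h).mul_left _)
  have h2 : (p : ℤ) ∣ 2 := by
    have : (p : ℤ) ∣ 2 * Y := hAB ▸ dvd_add hA hB
    exact (hp'.dvd_or_dvd this).resolve_right hY
  have hp2 : p = 2 := (Nat.prime_dvd_prime_iff_eq hp Nat.prime_two).mp (by exact_mod_cast h2)
  subst hp2
  obtain ⟨A', rfl⟩ := hA
  obtain ⟨B', rfl⟩ := hB
  have hY' : A' + B' = Y := by
    push_cast at hAB
    omega
  rw [show ((2 : ℕ) : ℤ) * A' * (((2 : ℕ) : ℤ) * B') = A' * (2 * (2 * B')) by push_cast; ring] at h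
  rw [Nat.gcd_self]
  by_cases hA' : ((2 : ℕ) : ℤ) ∣ A'
  · have hB' : ¬ ((2 : ℕ) : ℤ) ∣ B' := fun hB' => hY (hY' ▸ dvd_add hA' hB')
    rw [show A' * (2 * (2 * B')) = B' * (2 * (2 * A')) by ring] at h
    exact Or.inl (hp'.pow_dvd_of_dvd_mul_left l hB' h)
  · exact Or.inr (hp'.pow_dvd_of_dvd_mul_left l hA' h)

end StationaryPhase

section PrimePower

variable {p : ℕ} [hp : Fact p.Prime]

theorem not_dvd_val_unit {k : ℕ} (hk : k ≠ 0) (y : (ZMod (p ^ k))ˣ) :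
    ¬ (p : ℤ) ∣ (((y : ZMod (p ^ k)).val : ℕ) : ℤ) := by
  have h := ZMod.val_coe_unit_coprime y
  rw [Nat.coprime_pow_right_iff (Nat.pos_of_ne_zero hk)] at h
  rw [Int.natCast_dvd_natCast]
  exact fun hd => hp.out.one_lt.ne' (Nat.dvd_one.mp (h ▸ Nat.dvd_gcd hd dvd_rfl))

theorem pow_dvd_of_pow_mul_intCast_eq_zero {l s : ℕ} {A : ℤ}
    (h : (p : ZMod (p ^ (l + s))) ^ s * (A : ZMod (p ^ (l + s))) = 0) : (p : ℤ) ^ l ∣ A := by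
  have h1 : (((p : ℤ) ^ s * A : ℤ) : ZMod (p ^ (l + s))) = 0 := by
    push_cast
    exact h
  rw [ZMod.intCast_zmod_eq_zero_iff_dvd, add_comm] at h1
  push_cast at h1
  rw [pow_add] at h1
  exact (mul_dvd_mul_iff_left (pow_ne_zero s (by exact_mod_cast hp.out.ne_zero))).mp h1

theorem pow_dvd_of_mem_stationary {l s m n : ℕ} {y : (ZMod (p ^ (l + s)))ˣ}
    (hy : y ∈ stationary ((p : ZMod (p ^ (l + s))) ^ s) m n) :
    (p : ℤ) ^ l ∣ m * ((y : ZMod (p ^ (l + s))).val : ℤ) ^ 2 - n := by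
  apply pow_dvd_of_pow_mul_intCast_eq_zero (s := s)
  rw [mem_stationary] at hy
  push_cast
  rw [ZMod.natCast_zmod_val]
  have h1 : (y : ZMod (p ^ (l + s))) * (y⁻¹ : (ZMod (p ^ (l + s)))ˣ) = 1 := y.mul_inv
  linear_combination (y : ZMod (p ^ (l + s))) * hy + n * (p : ZMod (p ^ (l + s))) ^ s * h1

theorem dvd_iff_of_mem_stationary {l s m n : ℕ} (hl : l ≠ 0) {y : (ZMod (p ^ (l + s)))ˣ}
    (hy : y ∈ stationary ((p : ZMod (p ^ (l + s))) ^ s) m n) : p ∣ m ↔ p ∣ n := by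
  have hp' : Prime (p : ℤ) := Nat.prime_iff_prime_int.mp hp.out
  have h1 := (dvd_pow_self (p : ℤ) hl).trans (pow_dvd_of_mem_stationary hy)
  have h2 := not_dvd_val_unit (by omega) y
  rw [← Int.natCast_dvd_natCast, ← Int.natCast_dvd_natCast (n := n)]
  constructor
  · intro h
    exact (dvd_sub_right (h.mul_right _)).mp h1
  · intro h
    exact (hp'.dvd_or_dvd ((dvd_sub_left h).mp h1)).resolve_right
      fun h3 => h2 (hp'.dvd_of_dvd_pow h3)

theorem card_stationary_le {l s m n : ℕ} (hl : l ≠ 0) (hm : ¬ p ∣ m) :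
    (stationary ((p : ZMod (p ^ (l + s))) ^ s) m n).card ≤ 2 * (Nat.gcd 2 p * p ^ s) := by
  have hp' : Prime (p : ℤ) := Nat.prime_iff_prime_int.mp hp.out
  have : NeZero (p ^ (l + s)) := ⟨pow_ne_zero _ hp.out.ne_zero⟩
  rcases (stationary ((p : ZMod (p ^ (l + s))) ^ s) m n).eq_empty_or_nonempty with h0 | ⟨y₀, hy₀⟩
  · simp [h0]
  set c := Nat.gcd 2 p * p ^ s with hc
  have hc0 : 0 < c := Nat.mul_pos (Nat.gcd_pos_of_pos_left _ two_pos) (pow_pos hp.out.pos _)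
  set T : Finset (ZMod (p ^ (l + s))) := {t | (c : ZMod (p ^ (l + s))) * t = 0} with hT
  have hcast : ∀ A : ℤ, (p : ℤ) ^ l ∣ Nat.gcd 2 p * A →
      (c : ZMod (p ^ (l + s))) * (A : ZMod (p ^ (l + s))) = 0 := by
    intro A hA
    have h1 : ((c * A : ℤ) : ZMod (p ^ (l + s))) = 0 := by
      rw [ZMod.intCast_zmod_eq_zero_iff_dvd, hc]
      push_cast
      rw [pow_add, mul_comm ((Nat.gcd 2 p : ℕ) : ℤ), mul_assoc, mul_comm]
      exact mul_dvd_mul_left _ hA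
    push_cast at h1
    exact h1
  have hmem : ∀ y ∈ stationary ((p : ZMod (p ^ (l + s))) ^ s) m n,
      (y : ZMod (p ^ (l + s))) ∈
        T.image (fun t => t + (y₀ : ZMod (p ^ (l + s)))) ∪
        T.image (fun t => t - (y₀ : ZMod (p ^ (l + s)))) := by
    intro y hy
    set Y : ℤ := ((y : ZMod (p ^ (l + s))).val : ℤ) with hY
    set Y₀ : ℤ := ((y₀ : ZMod (p ^ (l + s))).val : ℤ) with hY₀
    have h1 : (p : ℤ) ^ l ∣ m * ((Y - Y₀) * (Y + Y₀)) := by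
      rw [show (m : ℤ) * ((Y - Y₀) * (Y + Y₀)) = (m * Y ^ 2 - n) - (m * Y₀ ^ 2 - n) by ring]
      exact dvd_sub (pow_dvd_of_mem_stationary hy) (pow_dvd_of_mem_stationary hy₀)
    have h2 := hp'.pow_dvd_of_dvd_mul_left l
      (fun h => hm (Int.natCast_dvd_natCast.mp h)) h1
    rw [Finset.mem_union, Finset.mem_image, Finset.mem_image]
    have hYc : ((Y : ℤ) : ZMod (p ^ (l + s))) = y := by
      rw [hY, Int.cast_natCast, ZMod.natCast_zmod_val]
    have hY₀c : ((Y₀ : ℤ) : ZMod (p ^ (l + s))) = y₀ := by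
      rw [hY₀, Int.cast_natCast, ZMod.natCast_zmod_val]
    rcases pow_dvd_or_of_dvd_mul hp.out (by ring) (not_dvd_val_unit (by omega) y) h2 with h3 | h3
    · refine Or.inl ⟨y - y₀, ?_, by ring⟩
      have := hcast _ h3
      push_cast at this
      rw [hYc, hY₀c] at this
      simpa [hT] using this
    · refine Or.inr ⟨y + y₀, ?_, by ring⟩
      have := hcast _ h3
      push_cast at this
      rw [hYc, hY₀c] at this
      simpa [hT] using this
  have hTc : T.card ≤ c := card_filter_mul_eq_zero_le hc0
  calc (stationary ((p : ZMod (p ^ (l + s))) ^ s) m n).card ≤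
      (T.image (fun t => t + (y₀ : ZMod (p ^ (l + s)))) ∪
        T.image (fun t => t - (y₀ : ZMod (p ^ (l + s))))).card :=
        Finset.card_le_card_of_injOn (fun y => (y : ZMod (p ^ (l + s))))
          (fun y hy => Finset.mem_coe.mpr (hmem y (Finset.mem_coe.mp hy)))
          (fun y _ z _ h => Units.ext h)
    _ ≤ T.card + T.card := (Finset.card_union_le _ _).trans
        (add_le_add Finset.card_image_le Finset.card_image_le)
    _ ≤ _ := by omega

end PrimePower

section PrimePowerBound

theorem natCast_pow_eq_zero {p k j : ℕ} (h : k ≤ j) : (p : ZMod (p ^ k)) ^ j = 0 := by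
  rw [← Nat.cast_pow, ZMod.natCast_eq_zero_iff]
  exact pow_dvd_pow p h

variable {p : ℕ} [hp : Fact p.Prime]

theorem card_stationary_le_of_not_dvd {l s m n : ℕ} (hl : l ≠ 0) (hmn : ¬ (p ∣ m ∧ p ∣ n)) :
    (stationary ((p : ZMod (p ^ (l + s))) ^ s) m n).card ≤ 2 * (Nat.gcd 2 p * p ^ s) := by
  by_cases hm : p ∣ m
  · rw [Finset.card_eq_zero.mpr]
    · exact Nat.zero_le _
    · rw [Finset.eq_empty_iff_forall_notMem]
      exact fun y hy => hmn ⟨hm, (dvd_iff_of_mem_stationary hl hy).mp hm⟩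
  · exact card_stationary_le hl hm

theorem norm_kloosterman_le_two_mul {l s : ℕ} (hl : l ≠ 0) (hs : l ≤ s)
    {ψ : AddChar (ZMod (p ^ (l + s))) ℂ} (hψ : ψ.IsPrimitive) {m n : ℕ}
    (hmn : ¬ (p ∣ m ∧ p ∣ n)) :
    ‖kloosterman ψ m n‖ ≤ 2 * (Nat.gcd 2 p * p ^ s) := by
  have h := norm_kloosterman_le_card_stationary hψ (d := (p : ZMod (p ^ (l + s))) ^ s)
    (by rw [← pow_mul]; exact natCast_pow_eq_zero (by omega)) (m := m) (n := n)
  exact h.trans (by exact_mod_cast card_stationary_le_of_not_dvd hl hmn)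

theorem isUnit_natCast_of_not_dvd {k a : ℕ} (h : ¬ p ∣ a) : IsUnit (a : ZMod (p ^ k)) := by
  rw [ZMod.isUnit_iff_coprime]
  exact (((Nat.Prime.coprime_iff_not_dvd hp.out).mpr h).pow_left k).symm

theorem norm_kloosterman_odd_le {l : ℕ} (hl : l ≠ 0) (h2 : p ≠ 2)
    {ψ : AddChar (ZMod (p ^ (l + (l + 1)))) ℂ} (hψ : ψ.IsPrimitive) {m n : ℕ}
    (hmn : ¬ (p ∣ m ∧ p ∣ n)) :
    ‖kloosterman ψ m n‖ ≤ 2 * (p ^ l * √p) := by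
  have : NeZero (p ^ (l + (l + 1))) := ⟨pow_ne_zero _ hp.out.ne_zero⟩
  have hp0 : (0 : ℝ) < p := by exact_mod_cast hp.out.pos
  have hgcd : Nat.gcd 2 p = 1 :=
    (Nat.coprime_primes Nat.prime_two hp.out).mpr (Ne.symm h2)
  have hmain := card_mul_norm_kloosterman_le hψ (c := (p : ZMod (p ^ (l + (l + 1)))) ^ l)
    (d := (p : ZMod (p ^ (l + (l + 1)))) ^ (l + 1))
    (by rw [← pow_mul]; exact natCast_pow_eq_zero (by omega))
    (by rw [← pow_mul]; exact natCast_pow_eq_zero (by omega))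
    (by rw [← pow_add]; exact natCast_pow_eq_zero (by omega)) m n
  have hcard := card_stationary_le_of_not_dvd (s := l + 1) hl hmn
  rw [hgcd, one_mul] at hcard
  rw [ZMod.card] at hmain
  have hinner : ∀ y ∈ stationary ((p : ZMod (p ^ (l + (l + 1)))) ^ (l + 1)) (m : ZMod _) n,
      ‖∑ z, ψ ((p : ZMod (p ^ (l + (l + 1)))) ^ l *
        (m * y - n * (y⁻¹ : (ZMod (p ^ (l + (l + 1))))ˣ)) * z +
        ((p : ZMod (p ^ (l + (l + 1)))) ^ l) ^ 2 * n *
          (y⁻¹ : (ZMod (p ^ (l + (l + 1))))ˣ) * z ^ 2)‖ ≤ (p : ℝ) ^ (2 * l) * √p := by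
    intro y hy
    have hn : ¬ p ∣ n := fun h => hmn ⟨(dvd_iff_of_mem_stationary hl hy).mpr h, h⟩
    have hu2 : IsUnit ((2 : ℕ) : ZMod (p ^ (l + (l + 1)))) :=
      isUnit_natCast_of_not_dvd fun h =>
        h2 ((Nat.prime_dvd_prime_iff_eq hp.out Nat.prime_two).mp h)
    have hun : IsUnit (n : ZMod (p ^ (l + (l + 1)))) := isUnit_natCast_of_not_dvd hn
    refine (sq_le_sq₀ (norm_nonneg _) (by positivity)).mp ?_
    refine (norm_sum_quadratic_sq_le hψ _ _).trans ?_
    have hfilter : ({h | 2 * (((p : ZMod (p ^ (l + (l + 1)))) ^ l) ^ 2 * n *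
        (y⁻¹ : (ZMod (p ^ (l + (l + 1))))ˣ)) * h = 0} : Finset (ZMod (p ^ (l + (l + 1))))) ⊆
        ({h | ((p ^ (2 * l) : ℕ) : ZMod (p ^ (l + (l + 1)))) * h = 0} : Finset _) := by
      intro h hh
      rw [Finset.mem_filter] at hh ⊢
      refine ⟨Finset.mem_univ _, ?_⟩
      have h3 := ((hu2.mul hun).mul y⁻¹.isUnit)
      refine h3.mul_left_cancel ?_
      rw [mul_zero, ← hh.2]
      push_cast
      ring
    have hc := (Finset.card_le_card hfilter).trans
      (card_filter_mul_eq_zero_le (pow_pos hp.out.pos _))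
    rw [ZMod.card]
    calc ((p ^ (l + (l + 1)) : ℕ) : ℝ) * _ ≤ ((p ^ (l + (l + 1)) : ℕ) : ℝ) * (p ^ (2 * l) : ℕ) := by
          gcongr
      _ = _ := by
          rw [mul_pow, Real.sq_sqrt hp0.le]
          push_cast
          ring
  have hsum := hmain.trans (Finset.sum_le_card_nsmul _ _ _ hinner)
  rw [nsmul_eq_mul] at hsum
  have hcard' : ((stationary ((p : ZMod (p ^ (l + (l + 1)))) ^ (l + 1)) (m : ZMod _) n).card : ℝ) ≤
      2 * p ^ (l + 1) := by exact_mod_cast hcard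
  have hfin := hsum.trans (mul_le_mul_of_nonneg_right hcard' (by positivity))
  push_cast at hfin
  rw [show 2 * (p : ℝ) ^ (l + 1) * ((p : ℝ) ^ (2 * l) * √p) =
    (p : ℝ) ^ (l + (l + 1)) * (2 * (p ^ l * √p)) by ring] at hfin
  exact le_of_mul_le_mul_left hfin (by positivity)

theorem kloosterman_zero_eq_neg_one {ψ : AddChar (ZMod p) ℂ} (hψ : ψ.IsPrimitive) {m : ℕ}
    (hm : ¬ p ∣ m) : kloosterman ψ (m : ZMod p) 0 = -1 := by
  have h0 : (m : ZMod p) ≠ 0 := by rwa [Ne, ZMod.natCast_eq_zero_iff]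
  have h1 : ∑ x : ZMod p, ψ (m * x) = 0 := by
    have := AddChar.sum_mulShift (m : ZMod p) hψ
    simpa [h0, mul_comm] using this
  rw [← Finset.add_sum_erase _ _ (Finset.mem_univ (0 : ZMod p)), mul_zero,
    AddChar.map_zero_eq_one] at h1
  rw [eq_neg_iff_add_eq_zero, add_comm, ← h1, kloosterman]
  congr 1
  refine Finset.sum_bij (fun x _ => (x : ZMod p)) (fun x _ => by simp)
    (fun x _ y _ h => Units.ext h) (fun x hx => ?_)
    (fun x _ => by rw [zero_mul, add_zero])
  exact ⟨Units.mk0 x (Finset.ne_of_mem_erase hx), Finset.mem_univ _, rfl⟩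

theorem norm_kloosterman_prime_le {ψ : AddChar (ZMod p) ℂ} (hψ : ψ.IsPrimitive) {m n : ℕ}
    (hmn : ¬ (p ∣ m ∧ p ∣ n)) : ‖kloosterman ψ m n‖ ≤ 2 * √p := by
  have hone : ∀ {m : ℕ}, ¬ p ∣ m → ‖kloosterman ψ (m : ZMod p) 0‖ ≤ 2 * √p := by
    intro m hm
    rw [kloosterman_zero_eq_neg_one hψ hm, norm_neg, norm_one]
    have : 1 ≤ √(p : ℝ) := Real.one_le_sqrt.mpr (by exact_mod_cast hp.out.one_lt.le)
    linarith
  by_cases hm : p ∣ m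
  · rw [(ZMod.natCast_eq_zero_iff m p).mpr hm, kloosterman_comm]
    exact hone fun h => hmn ⟨hm, h⟩
  · by_cases hn : p ∣ n
    · rw [(ZMod.natCast_eq_zero_iff n p).mpr hn]
      exact hone hm
    · refine norm_sum_units_prime_le ?_ ?_ ?_
      · intro h
        refine hψ (one_ne_zero) ?_
        rw [AddChar.mulShift_one, h]
      · rwa [Ne, ZMod.natCast_eq_zero_iff]
      · rwa [Ne, ZMod.natCast_eq_zero_iff]

theorem norm_kloosterman_prime_pow_le_of_not_dvd {k : ℕ} (hk : k ≠ 0)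
    {ψ : AddChar (ZMod (p ^ k)) ℂ} (hψ : ψ.IsPrimitive) {m n : ℕ} (hmn : ¬ (p ∣ m ∧ p ∣ n)) :
    ‖kloosterman ψ m n‖ ≤ Nat.gcd 2 p * (k + 1) * √((p ^ k : ℕ) : ℝ) := by
  have hp0 : (0 : ℝ) < p := by exact_mod_cast hp.out.pos
  have hg : (1 : ℝ) ≤ Nat.gcd 2 p := by exact_mod_cast Nat.gcd_pos_of_pos_left p two_pos
  obtain ⟨l, rfl | rfl⟩ : ∃ l, k = l + l ∨ k = l + (l + 1) := ⟨k / 2, by omega⟩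
  · have hl : l ≠ 0 := by omega
    refine (norm_kloosterman_le_two_mul hl le_rfl hψ hmn).trans ?_
    have : √((p ^ (l + l) : ℕ) : ℝ) = p ^ l := by
      push_cast
      rw [pow_add, Real.sqrt_mul_self (by positivity)]
    rw [this]
    have hl1 : (1 : ℝ) ≤ l := by exact_mod_cast Nat.one_le_iff_ne_zero.mpr hl
    push_cast
    have : 0 ≤ (Nat.gcd 2 p : ℝ) * p ^ l * ((l + l + 1) - 2) := by
      have : (0 : ℝ) ≤ (l + l + 1) - 2 := by linarith
      positivity
    linarith
  · rcases eq_or_ne l 0 with rfl | hl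
    · have : Fact (p ^ (0 + (0 + 1))).Prime := ⟨by simpa using hp.out⟩
      refine (norm_kloosterman_prime_le hψ (by simpa using hmn)).trans ?_
      push_cast
      have := Real.sqrt_nonneg ((p : ℝ) ^ (0 + (0 + 1)))
      nlinarith
    · have hsq : √((p ^ (l + (l + 1)) : ℕ) : ℝ) = p ^ l * √p := by
        push_cast
        rw [show (p : ℝ) ^ (l + (l + 1)) = (p ^ l) ^ 2 * p by ring, Real.sqrt_mul (by positivity),
          Real.sqrt_sq (by positivity)]
      have hl1 : (1 : ℝ) ≤ l := by exact_mod_cast Nat.one_le_iff_ne_zero.mpr hl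
      rw [hsq]
      by_cases h2 : p = 2
      · refine (norm_kloosterman_le_two_mul hl (Nat.le_succ l) hψ hmn).trans ?_
        subst h2
        push_cast [Nat.gcd_self]
        have h1 : (1 : ℝ) ≤ √2 := Real.one_le_sqrt.mpr one_le_two
        have h3 : (4 : ℝ) ≤ (l + (l + 1) + 1) * √2 := by nlinarith
        calc (2 : ℝ) * (2 * 2 ^ (l + 1)) = 4 * (2 * 2 ^ l) := by ring
          _ ≤ (l + (l + 1) + 1) * √2 * (2 * 2 ^ l) := by gcongr
          _ = _ := by ring
      · refine (norm_kloosterman_odd_le hl h2 hψ hmn).trans ?_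
        have : (2 : ℝ) ≤ Nat.gcd 2 p * (l + (l + 1) + 1) := by nlinarith
        push_cast
        gcongr

theorem totient_prime_mul_le (r : ℕ) : (p * r).totient ≤ p * r.totient := by
  by_cases h : p ∣ r
  · rw [Nat.totient_mul_of_prime_of_dvd hp.out h]
  · rw [Nat.totient_mul_of_prime_of_not_dvd hp.out h]
    exact Nat.mul_le_mul_right _ (Nat.sub_le p 1)

theorem norm_kloosterman_prime_mul_le {k : ℕ} {ψ : AddChar (ZMod (p ^ (k + 1))) ℂ}
    (hψ : ψ.IsPrimitive) : ∃ ψ' : AddChar (ZMod (p ^ k)) ℂ, ψ'.IsPrimitive ∧ ∀ m n : ℕ,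
      ‖kloosterman ψ (p * m : ℕ) (p * n : ℕ)‖ ≤ p * ‖kloosterman ψ' m n‖ := by
  obtain ⟨ψ', hψ', hK⟩ := kloosterman_mul_left (pow_succ' p k) hψ
  refine ⟨ψ', hψ', fun m n => ?_⟩
  have hr : 0 < (p ^ k).totient := Nat.totient_pos.mpr (pow_pos hp.out.pos k)
  have h2 := congrArg norm (hK m n)
  rw [norm_mul, norm_mul, Complex.norm_natCast, Complex.norm_natCast] at h2
  have h3 : ((p ^ (k + 1)).totient : ℝ) ≤ p * (p ^ k).totient := by
    rw [pow_succ']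
    exact_mod_cast totient_prime_mul_le (p ^ k)
  have h4 : ((p ^ k).totient : ℝ) * ‖kloosterman ψ (p * m : ℕ) (p * n : ℕ)‖ ≤
      (p ^ k).totient * (p * ‖kloosterman ψ' m n‖) := by
    rw [h2]
    calc _ ≤ (p * (p ^ k).totient : ℝ) * ‖kloosterman ψ' m n‖ := by gcongr
      _ = _ := by ring
  exact le_of_mul_le_mul_left h4 (by exact_mod_cast hr)

theorem norm_kloosterman_prime_pow_le (k : ℕ) :
    ∀ {ψ : AddChar (ZMod (p ^ k)) ℂ}, ψ.IsPrimitive → ∀ m n : ℕ,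
    ‖kloosterman ψ m n‖ ≤
      Nat.gcd 2 (p ^ k) * (k + 1) * √(Nat.gcd (Nat.gcd m n) (p ^ k)) * √((p ^ k : ℕ) : ℝ) := by
  induction k with
  | zero =>
    intro ψ _ m n
    refine (norm_kloosterman_le_card ψ _ _).trans ?_
    rw [ZMod.card_units_eq_totient]
    simp
  | succ k ih =>
    intro ψ hψ m n
    have hp0 : (0 : ℝ) < p := by exact_mod_cast hp.out.pos
    by_cases hmn : p ∣ m ∧ p ∣ n
    · obtain ⟨⟨m, rfl⟩, ⟨n, rfl⟩⟩ := hmn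
      obtain ⟨ψ', hψ', hK⟩ := norm_kloosterman_prime_mul_le hψ
      refine ((hK m n).trans (mul_le_mul_of_nonneg_left (ih hψ' m n) hp0.le)).trans ?_
      have hg2 : (Nat.gcd 2 (p ^ k) : ℝ) ≤ Nat.gcd 2 (p ^ (k + 1)) := by
        exact_mod_cast Nat.le_of_dvd (Nat.gcd_pos_of_pos_left _ two_pos)
          (Nat.gcd_dvd_gcd_of_dvd_right 2 (pow_dvd_pow p (Nat.le_succ k)))
      have hsq : √((Nat.gcd (Nat.gcd (p * m) (p * n)) (p ^ (k + 1)) : ℕ) : ℝ) *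
          √((p ^ (k + 1) : ℕ) : ℝ) =
          p * (√(Nat.gcd (Nat.gcd m n) (p ^ k)) * √((p ^ k : ℕ) : ℝ)) := by
        rw [Nat.gcd_mul_left, pow_succ', Nat.gcd_mul_left]
        push_cast
        rw [Real.sqrt_mul hp0.le, Real.sqrt_mul hp0.le]
        linear_combination (√(Nat.gcd (Nat.gcd m n) (p ^ k)) * √((p : ℝ) ^ k)) *
          Real.mul_self_sqrt hp0.le
      rw [mul_assoc _ (√(Nat.gcd (Nat.gcd (p * m) (p * n)) (p ^ (k + 1)) : ℝ)), hsq]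
      calc _ = Nat.gcd 2 (p ^ k) * (k + 1) *
            (p * (√(Nat.gcd (Nat.gcd m n) (p ^ k)) * √((p ^ k : ℕ) : ℝ))) := by ring
        _ ≤ _ := by
          gcongr
          exact Nat.le_succ k
    · refine (norm_kloosterman_prime_pow_le_of_not_dvd (Nat.succ_ne_zero k) hψ hmn).trans ?_
      have h1 : (1 : ℝ) ≤ √(Nat.gcd (Nat.gcd m n) (p ^ (k + 1))) :=
        Real.one_le_sqrt.mpr
          (by exact_mod_cast Nat.gcd_pos_of_pos_right _ (pow_pos hp.out.pos _))
      have h2 : (Nat.gcd 2 p : ℝ) ≤ Nat.gcd 2 (p ^ (k + 1)) := by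
        exact_mod_cast Nat.le_of_dvd (Nat.gcd_pos_of_pos_left _ two_pos)
          (Nat.gcd_dvd_gcd_of_dvd_right 2 (dvd_pow_self p (Nat.succ_ne_zero k)))
      refine mul_le_mul_of_nonneg_right ?_ (Real.sqrt_nonneg _)
      calc (Nat.gcd 2 p : ℝ) * (((k + 1 : ℕ) : ℝ) + 1) ≤
            Nat.gcd 2 (p ^ (k + 1)) * (((k + 1 : ℕ) : ℝ) + 1) := by gcongr
        _ ≤ _ := le_mul_of_one_le_right (by positivity) h1

end PrimePowerBound

/-- The **Weil–Estermann bound** for Kloosterman sums to an arbitrary modulus. -/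
theorem norm_kloosterman_le_gcd (q : ℕ) (hq : q ≠ 0) : ∀ [NeZero q] {ψ : AddChar (ZMod q) ℂ},
    ψ.IsPrimitive → ∀ m n : ℕ, ‖kloosterman ψ m n‖ ≤
      Nat.gcd 2 q * q.divisors.card * √(Nat.gcd (Nat.gcd m n) q) * √q := by
  induction q using Nat.recOnPosPrimePosCoprime with
  | prime_pow p k hp hk =>
    intro _ ψ hψ m n
    have : Fact p.Prime := ⟨hp⟩
    have := norm_kloosterman_prime_pow_le k hψ m n
    rw [Nat.divisors_prime_pow hp, Finset.card_map, Finset.card_range]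
    push_cast at this ⊢
    exact this
  | zero => exact absurd rfl hq
  | one =>
    intro _ ψ _ m n
    refine (norm_kloosterman_le_card ψ _ _).trans ?_
    rw [ZMod.card_units_eq_totient]
    simp
  | coprime a b ha hb hab iha ihb =>
    intro _ ψ hψ m n
    have : NeZero a := ⟨by omega⟩
    have : NeZero b := ⟨by omega⟩
    obtain ⟨ψ₁, ψ₂, h₁, h₂, hK⟩ := exists_kloosterman_mul hab hψ
    rw [hK, norm_mul, hab.card_divisors_mul, hab.gcd_mul, hab.gcd_mul]
    push_cast
    rw [Real.sqrt_mul (Nat.cast_nonneg _), Real.sqrt_mul (Nat.cast_nonneg _)]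
    refine (mul_le_mul (iha (by omega) h₁ m n) (ihb (by omega) h₂ m n) (norm_nonneg _)
      (by positivity)).trans (le_of_eq ?_)
    ring

theorem norm_kloosterman_le {q : ℕ} [NeZero q] {ψ : AddChar (ZMod q) ℂ} (hψ : ψ.IsPrimitive)
    (m n : ℕ) : ‖kloosterman ψ m n‖ ≤
      2 * q.divisors.card * √(Nat.gcd (Nat.gcd m n) q) * √q := by
  refine (norm_kloosterman_le_gcd q (NeZero.ne q) hψ m n).trans ?_
  gcongr
  exact_mod_cast Nat.gcd_le_left q two_pos

section Ramanujan

theorem norm_kloosterman_zero_prime_pow_le {p : ℕ} [hp : Fact p.Prime] (k : ℕ) :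
    ∀ {ψ : AddChar (ZMod (p ^ k)) ℂ}, ψ.IsPrimitive → ∀ m : ℕ,
    ‖kloosterman ψ m (0 : ℕ)‖ ≤ Nat.gcd m (p ^ k) := by
  induction k with
  | zero =>
    intro ψ _ m
    refine (norm_kloosterman_le_card ψ _ _).trans ?_
    rw [ZMod.card_units_eq_totient]
    simp
  | succ k ih =>
    intro ψ hψ m
    by_cases hm : p ∣ m
    · obtain ⟨m, rfl⟩ := hm
      obtain ⟨ψ', hψ', hK⟩ := norm_kloosterman_prime_mul_le hψ
      have := hK m 0
      rw [mul_zero] at this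
      refine this.trans ?_
      rw [pow_succ', Nat.gcd_mul_left, Nat.cast_mul]
      gcongr
      exact ih hψ' m
    · have h1 : (1 : ℝ) ≤ Nat.gcd m (p ^ (k + 1)) := by
        exact_mod_cast Nat.gcd_pos_of_pos_right _ (pow_pos hp.out.pos _)
      refine le_trans ?_ h1
      rcases Nat.eq_zero_or_pos k with rfl | hk
      · have : Fact (p ^ (0 + 1)).Prime := ⟨by simpa using hp.out⟩
        rw [Nat.cast_zero, kloosterman_zero_eq_neg_one hψ (by simpa using hm), norm_neg, norm_one]
      · have hd : ((p : ZMod (p ^ (k + 1))) ^ k) ^ 2 = 0 := by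
          rw [← pow_mul]
          exact natCast_pow_eq_zero (by omega)
        refine (norm_kloosterman_le_card_stationary hψ hd _ _).trans ?_
        rw [Finset.card_eq_zero.mpr]
        · simp
        · rw [Finset.eq_empty_iff_forall_notMem]
          intro y hy
          rw [mem_stationary, Nat.cast_zero, zero_mul, sub_zero,
            ((isUnit_natCast_of_not_dvd hm).mul y.isUnit).mul_left_eq_zero, ← Nat.cast_pow,
            ZMod.natCast_eq_zero_iff, Nat.pow_dvd_pow_iff_le_right hp.out.one_lt] at hy
          omega

theorem norm_kloosterman_zero_le_gcd (q : ℕ) (hq : q ≠ 0) :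
    ∀ [NeZero q] {ψ : AddChar (ZMod q) ℂ}, ψ.IsPrimitive → ∀ m : ℕ,
      ‖kloosterman ψ m (0 : ℕ)‖ ≤ Nat.gcd m q := by
  induction q using Nat.recOnPosPrimePosCoprime with
  | prime_pow p k hp hk =>
    intro _ ψ hψ m
    have : Fact p.Prime := ⟨hp⟩
    exact norm_kloosterman_zero_prime_pow_le k hψ m
  | zero => exact absurd rfl hq
  | one =>
    intro _ ψ _ m
    refine (norm_kloosterman_le_card ψ _ _).trans ?_
    rw [ZMod.card_units_eq_totient]
    simp
  | coprime a b ha hb hab iha ihb =>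
    intro _ ψ hψ m
    have : NeZero a := ⟨by omega⟩
    have : NeZero b := ⟨by omega⟩
    obtain ⟨ψ₁, ψ₂, h₁, h₂, hK⟩ := exists_kloosterman_mul hab hψ
    rw [hK, norm_mul, hab.gcd_mul, Nat.cast_mul]
    exact mul_le_mul (iha (by omega) h₁ m) (ihb (by omega) h₂ m) (norm_nonneg _)
      (by positivity)

/-- A Ramanujan sum is bounded by the greatest common divisor of its arguments. -/
theorem norm_kloosterman_zero_le {q : ℕ} [NeZero q] {ψ : AddChar (ZMod q) ℂ}
    (hψ : ψ.IsPrimitive) (m : ℕ) : ‖kloosterman ψ (m : ZMod q) 0‖ ≤ Nat.gcd m q := by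
  have := norm_kloosterman_zero_le_gcd q (NeZero.ne q) hψ m
  rwa [Nat.cast_zero] at this

end Ramanujan

section Weights

/-- The weight `1/h + 1/(q-h)` dominating the Fourier coefficients of an interval modulo `q`. -/
noncomputable def weight (q h : ℕ) : ℝ := (h : ℝ)⁻¹ + ((q : ℝ) - h)⁻¹

theorem weight_nonneg {q h : ℕ} (h0 : h < q) : 0 ≤ weight q h := by
  have : (0 : ℝ) ≤ (q : ℝ) - h := sub_nonneg.mpr (by exact_mod_cast h0.le)
  unfold weight
  positivity

theorem sum_inv_dvd_le {q d : ℕ} (hd : d ∣ q) (hq : q ≠ 0) :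
    ∑ h ∈ Finset.Ico 1 q with d ∣ h, (h : ℝ)⁻¹ ≤ (1 + Real.log q) / d := by
  obtain ⟨r, rfl⟩ := hd
  have hd0 : 0 < d := Nat.pos_of_ne_zero (left_ne_zero_of_mul hq)
  have hr0 : 0 < r := Nat.pos_of_ne_zero (right_ne_zero_of_mul hq)
  have hsub : (Finset.Ico 1 (d * r)).filter (d ∣ ·) ⊆ (Finset.Icc 1 r).image (d * ·) := by
    intro h hh
    rw [Finset.mem_filter, Finset.mem_Ico] at hh
    obtain ⟨⟨h1, h2⟩, j, rfl⟩ := hh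
    rw [Finset.mem_image]
    refine ⟨j, Finset.mem_Icc.mpr ⟨Nat.pos_of_mul_pos_left h1, ?_⟩, rfl⟩
    exact (Nat.lt_of_mul_lt_mul_left h2).le
  calc ∑ h ∈ Finset.Ico 1 (d * r) with d ∣ h, (h : ℝ)⁻¹
      ≤ ∑ h ∈ (Finset.Icc 1 r).image (d * ·), (h : ℝ)⁻¹ :=
        Finset.sum_le_sum_of_subset_of_nonneg hsub fun _ _ _ => by positivity
    _ = ∑ j ∈ Finset.Icc 1 r, ((d * j : ℕ) : ℝ)⁻¹ :=
        Finset.sum_image fun a _ b _ hab => Nat.eq_of_mul_eq_mul_left hd0 hab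
    _ = (∑ j ∈ Finset.Icc 1 r, (j : ℝ)⁻¹) / d := by
        rw [Finset.sum_div]
        refine Finset.sum_congr rfl fun j _ => ?_
        push_cast
        rw [mul_inv, mul_comm, div_eq_mul_inv]
    _ ≤ (1 + Real.log (d * r : ℕ)) / d := by
        gcongr
        have h1 := harmonic_le_one_add_log r
        rw [harmonic_eq_sum_Icc] at h1
        push_cast at h1
        refine h1.trans ?_
        gcongr
        exact Nat.le_mul_of_pos_left r hd0

theorem sum_weight_dvd_le {q d : ℕ} (hd : d ∣ q) (hq : q ≠ 0) :
    ∑ h ∈ Finset.Ico 1 q with d ∣ h, weight q h ≤ 2 * (1 + Real.log q) / d := by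
  have hrefl : ∑ h ∈ Finset.Ico 1 q with d ∣ h, ((q : ℝ) - h)⁻¹ =
      ∑ h ∈ Finset.Ico 1 q with d ∣ h, (h : ℝ)⁻¹ := by
    refine Finset.sum_nbij' (fun h => q - h) (fun h => q - h) ?_ ?_ ?_ ?_ ?_
    · intro h hh
      rw [Finset.mem_filter, Finset.mem_Ico] at hh ⊢
      exact ⟨by omega, Nat.dvd_sub hd hh.2⟩
    · intro h hh
      rw [Finset.mem_filter, Finset.mem_Ico] at hh ⊢
      exact ⟨by omega, Nat.dvd_sub hd hh.2⟩
    · intro h hh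
      rw [Finset.mem_filter, Finset.mem_Ico] at hh
      omega
    · intro h hh
      rw [Finset.mem_filter, Finset.mem_Ico] at hh
      omega
    · intro h hh
      rw [Finset.mem_filter, Finset.mem_Ico] at hh
      rw [Nat.cast_sub hh.1.2.le]
  simp only [weight]
  rw [Finset.sum_add_distrib, hrefl, mul_div_assoc]
  linarith [sum_inv_dvd_le hd hq]

theorem sum_weight_mul_gcd_le {q : ℕ} (hq : q ≠ 0) :
    ∑ h ∈ Finset.Ico 1 q, weight q h * Nat.gcd h q ≤
      2 * (1 + Real.log q) * q.divisors.card := by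
  calc ∑ h ∈ Finset.Ico 1 q, weight q h * Nat.gcd h q
      ≤ ∑ h ∈ Finset.Ico 1 q, ∑ d ∈ q.divisors, if d ∣ h then weight q h * d else 0 := by
        refine Finset.sum_le_sum fun h hh => ?_
        have hw := weight_nonneg (Finset.mem_Ico.mp hh).2
        rw [← Finset.sum_filter]
        exact Finset.single_le_sum (f := fun d : ℕ => weight q h * (d : ℝ))
          (fun d _ => by positivity) (Finset.mem_filter.mpr
            ⟨Nat.mem_divisors.mpr ⟨Nat.gcd_dvd_right h q, hq⟩, Nat.gcd_dvd_left h q⟩)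
    _ = ∑ d ∈ q.divisors, (∑ h ∈ Finset.Ico 1 q with d ∣ h, weight q h) * d := by
        rw [Finset.sum_comm]
        refine Finset.sum_congr rfl fun d _ => ?_
        rw [← Finset.sum_filter, Finset.sum_mul]
    _ ≤ ∑ d ∈ q.divisors, 2 * (1 + Real.log q) := by
        refine Finset.sum_le_sum fun d hd => ?_
        have hd0 : (0 : ℝ) < d := by exact_mod_cast Nat.pos_of_mem_divisors hd
        rw [← le_div_iff₀ hd0]
        exact sum_weight_dvd_le (Nat.dvd_of_mem_divisors hd) hq
    _ = _ := by rw [Finset.sum_const, nsmul_eq_mul, mul_comm]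

theorem exists_sum_sqrt_div_sq_le :
    ∃ Z : ℝ, 0 ≤ Z ∧ ∀ s : Finset ℕ, ∑ d ∈ s, √(d : ℝ) / (d : ℝ) ^ 2 ≤ Z := by
  have hs : Summable fun d : ℕ => √(d : ℝ) / (d : ℝ) ^ 2 := by
    refine ((Real.summable_one_div_nat_rpow (p := 3 / 2)).mpr (by norm_num)).congr fun d => ?_
    rcases Nat.eq_zero_or_pos d with rfl | hd
    · norm_num
    · have hd0 : (0 : ℝ) < d := by exact_mod_cast hd
      rw [Real.sqrt_eq_rpow, ← Real.rpow_natCast, ← Real.rpow_sub hd0, one_div,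
        ← Real.rpow_neg hd0.le]
      norm_num
  exact ⟨∑' d : ℕ, √(d : ℝ) / (d : ℝ) ^ 2, tsum_nonneg fun d => by positivity,
    fun s => hs.sum_le_tsum s fun d _ => by positivity⟩

theorem sum_weight_mul_weight_mul_sqrt_gcd_le {Z : ℝ}
    (hZ : ∀ s : Finset ℕ, ∑ d ∈ s, √(d : ℝ) / (d : ℝ) ^ 2 ≤ Z) {q : ℕ} (hq : q ≠ 0) :
    ∑ h ∈ Finset.Ico 1 q, ∑ k ∈ Finset.Ico 1 q,
      weight q h * weight q k * √(Nat.gcd (Nat.gcd h k) q) ≤ 4 * (1 + Real.log q) ^ 2 * Z := by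
  have hlog : 0 ≤ Real.log q := Real.log_natCast_nonneg q
  calc ∑ h ∈ Finset.Ico 1 q, ∑ k ∈ Finset.Ico 1 q,
        weight q h * weight q k * √(Nat.gcd (Nat.gcd h k) q)
      ≤ ∑ h ∈ Finset.Ico 1 q, ∑ k ∈ Finset.Ico 1 q, ∑ d ∈ q.divisors,
          √d * ((if d ∣ h then weight q h else 0) * (if d ∣ k then weight q k else 0)) := by
        refine Finset.sum_le_sum fun h hh => Finset.sum_le_sum fun k hk => ?_
        have hw := weight_nonneg (Finset.mem_Ico.mp hh).2
        have hw' := weight_nonneg (Finset.mem_Ico.mp hk).2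
        set g := Nat.gcd (Nat.gcd h k) q with hg
        have hgh : g ∣ h := (Nat.gcd_dvd_left _ _).trans (Nat.gcd_dvd_left _ _)
        have hgk : g ∣ k := (Nat.gcd_dvd_left _ _).trans (Nat.gcd_dvd_right _ _)
        refine le_trans (le_of_eq ?_) (Finset.single_le_sum (f := fun d : ℕ =>
          √d * ((if d ∣ h then weight q h else 0) * (if d ∣ k then weight q k else 0)))
          (fun d _ => ?_) (Nat.mem_divisors.mpr ⟨Nat.gcd_dvd_right (Nat.gcd h k) q, hq⟩))
        · rw [← hg, if_pos hgh, if_pos hgk]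
          ring
        · refine mul_nonneg (Real.sqrt_nonneg _) (mul_nonneg ?_ ?_) <;> split_ifs <;>
            first | assumption | exact le_rfl
    _ = ∑ d ∈ q.divisors, √d * (∑ h ∈ Finset.Ico 1 q with d ∣ h, weight q h) ^ 2 := by
        simp_rw [Finset.sum_comm (s := Finset.Ico 1 q) (t := q.divisors)]
        refine Finset.sum_congr rfl fun d _ => ?_
        rw [sq, Finset.sum_filter, Finset.sum_mul_sum, Finset.mul_sum]
        refine Finset.sum_congr rfl fun h _ => ?_
        rw [Finset.mul_sum]
    _ ≤ ∑ d ∈ q.divisors, 4 * (1 + Real.log q) ^ 2 * (√d / d ^ 2) := by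
        refine Finset.sum_le_sum fun d hd => ?_
        have h1 := sum_weight_dvd_le (Nat.dvd_of_mem_divisors hd) hq
        have h0 : 0 ≤ ∑ h ∈ Finset.Ico 1 q with d ∣ h, weight q h :=
          Finset.sum_nonneg fun h hh =>
            weight_nonneg (Finset.mem_Ico.mp (Finset.mem_filter.mp hh).1).2
        calc √d * (∑ h ∈ Finset.Ico 1 q with d ∣ h, weight q h) ^ 2
            ≤ √d * (2 * (1 + Real.log q) / d) ^ 2 := by gcongr
          _ = _ := by ring
    _ ≤ _ := by
        rw [← Finset.mul_sum]
        exact mul_le_mul_of_nonneg_left (hZ _) (by positivity)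

end Weights

section ExponentialSum

theorem two_mul_mul_one_sub_le_sin {t : ℝ} (h0 : 0 ≤ t) (h1 : t ≤ 1) :
    2 * t * (1 - t) ≤ Real.sin (Real.pi * t) := by
  have key : ∀ s : ℝ, 0 ≤ s → s ≤ 1 / 2 → 2 * s * (1 - s) ≤ Real.sin (Real.pi * s) := by
    intro s hs0 hs1
    have h := Real.mul_le_sin (x := Real.pi * s) (by positivity) (by nlinarith [Real.pi_pos])
    rw [← mul_assoc, div_mul_cancel₀ _ Real.pi_ne_zero] at h
    nlinarith
  rcases le_total t (1 / 2) with ht | ht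
  · exact key t h0 ht
  · have h := key (1 - t) (by linarith) (by linarith)
    rw [show Real.pi * (1 - t) = Real.pi - Real.pi * t by ring, Real.sin_pi_sub] at h
    linarith

theorem norm_geom_sum_mul_le {ζ : ℂ} (hζ : ‖ζ‖ = 1) (N : ℕ) :
    ‖∑ j ∈ Finset.range N, ζ ^ j‖ * ‖ζ - 1‖ ≤ 2 := by
  rw [← norm_mul, geom_sum_mul]
  refine (norm_sub_le _ _).trans ?_
  rw [norm_pow, hζ, one_pow, norm_one]
  norm_num

theorem norm_stdAddChar_neg_sub_one (q : ℕ) [NeZero q] (h : ℕ) :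
    ‖ZMod.stdAddChar (N := q) (-(h : ZMod q)) - 1‖ = 2 * |Real.sin (Real.pi * (h / q))| := by
  have h1 := ZMod.stdAddChar_coe (N := q) (-(h : ℤ))
  push_cast at h1
  rw [h1, show 2 * (Real.pi : ℂ) * Complex.I * -(h : ℂ) / q =
    Complex.I * ((-(2 * Real.pi * h / q) : ℝ) : ℂ) by push_cast; ring,
    Complex.norm_exp_I_mul_ofReal_sub_one, Real.norm_eq_abs,
    show -(2 * Real.pi * (h : ℝ) / q) / 2 = -(Real.pi * (h / q)) by ring, Real.sin_neg, mul_neg,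
    abs_neg, abs_mul, abs_two]

/-- The Fourier transform at frequency `h` of the integer interval `(a, b]` modulo `q`. -/
noncomputable def intervalSum (q : ℕ) [NeZero q] (a b : ℤ) (h : ZMod q) : ℂ :=
  ∑ u ∈ Finset.Ioc a b, ZMod.stdAddChar (-h * (u : ZMod q))

theorem norm_intervalSum_le {q : ℕ} [NeZero q] (a b : ℤ) {h : ℕ} (h1 : 1 ≤ h) (hq : h < q) :
    ‖intervalSum q a b h‖ ≤ q / 2 * weight q h := by
  have hsum : intervalSum q a b h = ZMod.stdAddChar (-(h : ZMod q) * ((a + 1 : ℤ) : ZMod q)) *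
      ∑ j ∈ Finset.range (b - a).toNat, ZMod.stdAddChar (-(h : ZMod q)) ^ j := by
    rw [intervalSum, show Finset.Ioc a b = (Finset.range (b - a).toNat).map
      (Nat.castEmbedding.trans (addLeftEmbedding (a + 1))) from rfl, Finset.sum_map,
      Finset.mul_sum]
    refine Finset.sum_congr rfl fun j _ => ?_
    rw [← AddChar.map_nsmul_eq_pow, ← AddChar.map_add_eq_mul]
    congr 1
    simp only [Function.Embedding.trans_apply, Nat.castEmbedding_apply, addLeftEmbedding_apply,
      nsmul_eq_mul]
    push_cast
    ring
  have hq0 : (0 : ℝ) < q := by exact_mod_cast (by omega : 0 < q)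
  have hh0 : (0 : ℝ) < h := by exact_mod_cast h1
  have hqh : (0 : ℝ) < (q : ℝ) - h := sub_pos.mpr (by exact_mod_cast hq)
  have ht1 : (h : ℝ) / q ≤ 1 := (div_le_one hq0).mpr (by exact_mod_cast hq.le)
  have hsin := two_mul_mul_one_sub_le_sin (t := h / q) (by positivity) ht1
  have hgeom := norm_geom_sum_mul_le (AddChar.norm_apply ZMod.stdAddChar (-(h : ZMod q)))
    (b - a).toNat
  rw [norm_stdAddChar_neg_sub_one] at hgeom
  rw [hsum, norm_mul, AddChar.norm_apply, one_mul]
  set X := ‖∑ j ∈ Finset.range (b - a).toNat, ZMod.stdAddChar (-(h : ZMod q)) ^ j‖ with hX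
  have hX0 : 0 ≤ X := norm_nonneg _
  have hw : q / 2 * weight q h = 1 / (2 * (h / q) * (1 - h / q)) := by
    rw [weight]
    have : (1 : ℝ) - h / q ≠ 0 := by
      rw [one_sub_div hq0.ne']
      positivity
    field_simp
    ring
  have hpos : (0 : ℝ) < 2 * (h / q) * (1 - h / q) := by
    rw [one_sub_div hq0.ne']
    positivity
  rw [hw, le_div_iff₀ hpos]
  have := mul_le_mul_of_nonneg_left (hsin.trans (le_abs_self _)) hX0
  linarith

theorem intervalSum_zero {q : ℕ} [NeZero q] (a b : ℤ) :
    intervalSum q a b 0 = ((b - a).toNat : ℂ) := by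
  simp [intervalSum]

/-- Fourier expansion of the number of integers in `(a, b]` in a given residue class. -/
theorem mul_card_filter_eq {q : ℕ} [NeZero q] (a b : ℤ) (x : ZMod q) :
    (q : ℂ) * ((Finset.Ioc a b).filter (fun u : ℤ => (u : ZMod q) = x)).card =
      ∑ h : ZMod q, intervalSum q a b h * ZMod.stdAddChar (h * x) := by
  simp_rw [intervalSum, Finset.sum_mul]
  rw [Finset.sum_comm, Finset.card_filter, Nat.cast_sum, Finset.mul_sum]
  refine Finset.sum_congr rfl fun u _ => ?_
  have := AddChar.sum_mulShift (x - (u : ZMod q)) (ZMod.isPrimitive_stdAddChar q)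
  calc (q : ℂ) * ((if (u : ZMod q) = x then 1 else 0 : ℕ) : ℂ)
      = ∑ h : ZMod q, ZMod.stdAddChar (h * (x - (u : ZMod q))) := by
        rw [this, ZMod.card]
        by_cases hux : (u : ZMod q) = x
        · simp [hux]
        · simp [hux, sub_eq_zero, Ne.symm hux]
    _ = _ := by
        refine Finset.sum_congr rfl fun h _ => ?_
        rw [← AddChar.map_add_eq_mul]
        congr 1
        ring

end ExponentialSum

section Completion

theorem ite_mul_eq_one {R : Type*} [CommRing R] [DecidableEq R] [Fintype Rˣ] (r s : R) :
    (if r * s = 1 then 1 else 0 : ℕ) = ∑ x : Rˣ,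
      (if r = x then 1 else 0) * (if s = (x⁻¹ : Rˣ) then 1 else 0) := by
  by_cases h : r * s = 1
  · rw [if_pos h, Finset.sum_eq_single (Units.mkOfMulEqOne r s h)]
    · have h1 : ((Units.mkOfMulEqOne r s h)⁻¹ : Rˣ) = s := rfl
      simp [h1]
    · intro x _ hx
      rw [if_neg, zero_mul]
      rintro rfl
      exact hx (Units.ext rfl)
    · simp
  · rw [if_neg h, eq_comm]
    refine Finset.sum_eq_zero fun x _ => ?_
    by_cases h1 : r = x
    · rw [if_neg (c := s = _), mul_zero]
      rintro rfl
      exact h (by rw [h1, Units.mul_inv])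
    · rw [if_neg h1, zero_mul]

theorem boxCount_eq_sum (q : ℕ) [NeZero q] (Q1 Q2 P1 P2 : ℝ) :
    boxCount q Q1 Q2 P1 P2 = ∑ x : (ZMod q)ˣ,
      ((Finset.Ioc ⌊Q1⌋ ⌊Q1 + P1⌋).filter (fun u : ℤ => (u : ZMod q) = x)).card *
      ((Finset.Ioc ⌊Q2⌋ ⌊Q2 + P2⌋).filter
        (fun v : ℤ => (v : ZMod q) = (x⁻¹ : (ZMod q)ˣ))).card := by
  have hset : {p : ℤ × ℤ | Q1 < (p.1 : ℝ) ∧ (p.1 : ℝ) ≤ Q1 + P1 ∧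
      Q2 < (p.2 : ℝ) ∧ (p.2 : ℝ) ≤ Q2 + P2 ∧ p.1 * p.2 ≡ 1 [ZMOD q]} =
      (((Finset.Ioc ⌊Q1⌋ ⌊Q1 + P1⌋) ×ˢ (Finset.Ioc ⌊Q2⌋ ⌊Q2 + P2⌋)).filter
        (fun p : ℤ × ℤ => (p.1 : ZMod q) * (p.2 : ZMod q) = 1) : Finset (ℤ × ℤ)) := by
    ext ⟨u, v⟩
    have hmod : u * v ≡ 1 [ZMOD q] ↔ (u : ZMod q) * (v : ZMod q) = 1 := by
      rw [← ZMod.intCast_eq_intCast_iff]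
      push_cast
      rfl
    simp only [Set.mem_ofPred_eq, Finset.coe_filter, Finset.mem_product, Finset.mem_Ioc,
      Int.floor_lt, Int.le_floor, hmod]
    tauto
  rw [boxCount, hset, Set.ncard_coe_finset, Finset.card_filter, Finset.sum_product]
  simp_rw [ite_mul_eq_one, Finset.card_filter, Finset.sum_mul_sum]
  rw [Finset.sum_comm (s := Finset.univ)]
  refine Finset.sum_congr rfl fun u _ => ?_
  rw [Finset.sum_comm]

theorem sq_mul_boxCount (q : ℕ) [NeZero q] (Q1 Q2 P1 P2 : ℝ) :
    (q : ℂ) ^ 2 * boxCount q Q1 Q2 P1 P2 = ∑ h : ZMod q, ∑ k : ZMod q,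
      intervalSum q ⌊Q1⌋ ⌊Q1 + P1⌋ h * intervalSum q ⌊Q2⌋ ⌊Q2 + P2⌋ k *
        kloosterman ZMod.stdAddChar h k := by
  rw [boxCount_eq_sum, Nat.cast_sum, Finset.mul_sum]
  simp_rw [kloosterman, Finset.mul_sum]
  simp_rw [Finset.sum_comm (s := (Finset.univ : Finset (ZMod q)))
    (t := (Finset.univ : Finset (ZMod q)ˣ))]
  refine Finset.sum_congr rfl fun x _ => ?_
  rw [Nat.cast_mul, show ∀ A B : ℂ, (q : ℂ) ^ 2 * (A * B) = (q * A) * (q * B) by intros; ring,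
    mul_card_filter_eq, mul_card_filter_eq, Finset.sum_mul_sum]
  refine Finset.sum_congr rfl fun h _ => Finset.sum_congr rfl fun k _ => ?_
  rw [AddChar.map_add_eq_mul]
  ring

theorem sum_zmod_eq {M : Type*} [AddCommMonoid M] {q : ℕ} [NeZero q] (f : ZMod q → M) :
    ∑ h, f h = f 0 + ∑ h ∈ Finset.Ico 1 q, f (h : ZMod q) := by
  have h1 : ∑ h, f h = ∑ h ∈ Finset.range q, f (h : ZMod q) := by
    symm
    refine Finset.sum_nbij' (fun h => (h : ZMod q)) ZMod.val (fun _ _ => Finset.mem_univ _)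
      (fun h _ => Finset.mem_range.mpr (ZMod.val_lt h))
      (fun h hh => ZMod.val_cast_of_lt (Finset.mem_range.mp hh))
      (fun h _ => ZMod.natCast_zmod_val h) (fun _ _ => rfl)
  rw [h1, Finset.range_eq_Ico, Finset.sum_eq_sum_Ico_succ_bot (NeZero.pos q), Nat.cast_zero]

theorem kloosterman_zero_zero (q : ℕ) [NeZero q] :
    kloosterman (ZMod.stdAddChar (N := q)) 0 0 = q.totient := by
  simp [kloosterman, ZMod.card_units_eq_totient]

theorem toNat_floor_sub_le {Q P : ℝ} {q : ℕ} (h : P ≤ q) :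
    (((⌊Q + P⌋ - ⌊Q⌋).toNat : ℕ) : ℝ) ≤ q := by
  have h1 : ⌊Q + P⌋ ≤ ⌊Q⌋ + q := by
    rw [← Int.floor_add_natCast]
    exact Int.floor_mono (by linarith)
  have h2 : (⌊Q + P⌋ - ⌊Q⌋).toNat ≤ q := by omega
  exact_mod_cast h2

theorem abs_toNat_floor_sub_sub_le {Q P : ℝ} (h : 0 ≤ P) :
    |(((⌊Q + P⌋ - ⌊Q⌋).toNat : ℕ) : ℝ) - P| ≤ 1 := by
  have h1 : ⌊Q⌋ ≤ ⌊Q + P⌋ := Int.floor_mono (by linarith)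
  have h2 : (((⌊Q + P⌋ - ⌊Q⌋).toNat : ℕ) : ℝ) = (⌊Q + P⌋ : ℝ) - ⌊Q⌋ := by
    have : (((⌊Q + P⌋ - ⌊Q⌋).toNat : ℤ)) = ⌊Q + P⌋ - ⌊Q⌋ := Int.toNat_of_nonneg (by omega)
    exact_mod_cast this
  rw [h2, abs_le]
  constructor <;> linarith [Int.floor_le Q, Int.lt_floor_add_one Q, Int.floor_le (Q + P),
    Int.lt_floor_add_one (Q + P)]

/-- The completed count: main term plus the contribution of the nonzero frequencies. -/
theorem abs_boxCount_sub_le {Z : ℝ}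
    (hZ : ∀ s : Finset ℕ, ∑ d ∈ s, √(d : ℝ) / (d : ℝ) ^ 2 ≤ Z) (q : ℕ) [NeZero q]
    (Q1 Q2 : ℝ) {P1 P2 : ℝ} (hP1 : P1 ≤ q) (hP2 : P2 ≤ q) :
    |(boxCount q Q1 Q2 P1 P2 : ℝ) - (q.totient : ℝ) / q ^ 2 *
      ((⌊Q1 + P1⌋ - ⌊Q1⌋).toNat : ℕ) * ((⌊Q2 + P2⌋ - ⌊Q2⌋).toNat : ℕ)| ≤
      2 * q.divisors.card * (1 + Real.log q) +
        2 * q.divisors.card * √q * ((1 + Real.log q) ^ 2 * Z) := by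
  have hq : q ≠ 0 := NeZero.ne q
  have hq0 : (0 : ℝ) < q := by exact_mod_cast Nat.pos_of_ne_zero hq
  have hN1 := toNat_floor_sub_le (Q := Q1) hP1
  have hN2 := toNat_floor_sub_le (Q := Q2) hP2
  have hprim := ZMod.isPrimitive_stdAddChar q
  set N1 := (⌊Q1 + P1⌋ - ⌊Q1⌋).toNat with hN1def
  set N2 := (⌊Q2 + P2⌋ - ⌊Q2⌋).toNat with hN2def
  set L := 1 + Real.log q with hL
  set I := intervalSum q ⌊Q1⌋ ⌊Q1 + P1⌋ with hI
  set J := intervalSum q ⌊Q2⌋ ⌊Q2 + P2⌋ with hJ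
  have hI0 : I 0 = (N1 : ℂ) := intervalSum_zero _ _
  have hJ0 : J 0 = (N2 : ℂ) := intervalSum_zero _ _
  have hIb : ∀ h ∈ Finset.Ico 1 q, ‖I h‖ ≤ q / 2 * weight q h := fun h hh =>
    norm_intervalSum_le _ _ (Finset.mem_Ico.mp hh).1 (Finset.mem_Ico.mp hh).2
  have hJb : ∀ h ∈ Finset.Ico 1 q, ‖J h‖ ≤ q / 2 * weight q h := fun h hh =>
    norm_intervalSum_le _ _ (Finset.mem_Ico.mp hh).1 (Finset.mem_Ico.mp hh).2
  have hw : ∀ h ∈ Finset.Ico 1 q, 0 ≤ weight q h := fun h hh =>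
    weight_nonneg (Finset.mem_Ico.mp hh).2
  have hsplit := sq_mul_boxCount q Q1 Q2 P1 P2
  rw [← hI, ← hJ, sum_zmod_eq, sum_zmod_eq (fun k => I 0 * J k * _)] at hsplit
  simp_rw [fun h : ZMod q => sum_zmod_eq
    (fun k => I h * J k * kloosterman ZMod.stdAddChar h k)] at hsplit
  rw [Finset.sum_add_distrib, hI0, hJ0, kloosterman_zero_zero] at hsplit
  have hg := sum_weight_mul_gcd_le hq
  rw [← hL] at hg
  have hB1 : ‖∑ k ∈ Finset.Ico 1 q, (N1 : ℂ) * J k * kloosterman ZMod.stdAddChar 0 (k : ZMod q)‖ ≤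
      q ^ 2 * (L * q.divisors.card) := by
    calc _ ≤ ∑ k ∈ Finset.Ico 1 q, (q : ℝ) * (q / 2 * weight q k) * Nat.gcd k q := by
          refine norm_sum_le_of_le _ fun k hk => ?_
          have := hw k hk
          rw [norm_mul, norm_mul, Complex.norm_natCast, kloosterman_comm]
          gcongr
          · exact hJb k hk
          · exact norm_kloosterman_zero_le hprim k
      _ = q ^ 2 / 2 * ∑ k ∈ Finset.Ico 1 q, weight q k * Nat.gcd k q := by
          rw [Finset.mul_sum]
          exact Finset.sum_congr rfl fun k _ => by ring
      _ ≤ q ^ 2 / 2 * (2 * L * q.divisors.card) := by gcongr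
      _ = _ := by ring
  have hB2 : ‖∑ h ∈ Finset.Ico 1 q, I h * (N2 : ℂ) * kloosterman ZMod.stdAddChar (h : ZMod q) 0‖ ≤
      q ^ 2 * (L * q.divisors.card) := by
    calc _ ≤ ∑ k ∈ Finset.Ico 1 q, (q / 2 * weight q k) * (q : ℝ) * Nat.gcd k q := by
          refine norm_sum_le_of_le _ fun k hk => ?_
          have := hw k hk
          rw [norm_mul, norm_mul, Complex.norm_natCast]
          gcongr
          · exact hIb k hk
          · exact norm_kloosterman_zero_le hprim k
      _ = q ^ 2 / 2 * ∑ k ∈ Finset.Ico 1 q, weight q k * Nat.gcd k q := by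
          rw [Finset.mul_sum]
          exact Finset.sum_congr rfl fun k _ => by ring
      _ ≤ q ^ 2 / 2 * (2 * L * q.divisors.card) := by gcongr
      _ = _ := by ring
  have hB3 : ‖∑ h ∈ Finset.Ico 1 q, ∑ k ∈ Finset.Ico 1 q,
      I h * J k * kloosterman ZMod.stdAddChar (h : ZMod q) (k : ZMod q)‖ ≤
      q ^ 2 * (2 * q.divisors.card * √q * (L ^ 2 * Z)) := by
    calc _ ≤ ∑ h ∈ Finset.Ico 1 q, ∑ k ∈ Finset.Ico 1 q,
          (q / 2 * weight q h) * (q / 2 * weight q k) *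
            (2 * q.divisors.card * √(Nat.gcd (Nat.gcd h k) q) * √q) := by
          refine norm_sum_le_of_le _ fun h hh => norm_sum_le_of_le _ fun k hk => ?_
          have := hw k hk
          have := hw h hh
          rw [norm_mul, norm_mul]
          gcongr
          · exact hIb h hh
          · exact hJb k hk
          · exact norm_kloosterman_le hprim h k
      _ = q ^ 2 / 2 * q.divisors.card * √q * ∑ h ∈ Finset.Ico 1 q, ∑ k ∈ Finset.Ico 1 q,
          weight q h * weight q k * √(Nat.gcd (Nat.gcd h k) q) := by
          simp_rw [Finset.mul_sum]
          exact Finset.sum_congr rfl fun h _ => Finset.sum_congr rfl fun k _ => by ring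
      _ ≤ q ^ 2 / 2 * q.divisors.card * √q * (4 * L ^ 2 * Z) := by
          gcongr
          exact sum_weight_mul_weight_mul_sqrt_gcd_le hZ hq
      _ = _ := by ring
  have hnorm : (q : ℝ) ^ 2 * |(boxCount q Q1 Q2 P1 P2 : ℝ) - (q.totient : ℝ) / q ^ 2 * N1 * N2| =
      ‖(q : ℂ) ^ 2 * boxCount q Q1 Q2 P1 P2 - N1 * N2 * q.totient‖ := by
    have hc : (q : ℂ) ^ 2 * boxCount q Q1 Q2 P1 P2 - N1 * N2 * q.totient =
        (((q : ℝ) ^ 2 * ((boxCount q Q1 Q2 P1 P2 : ℝ) -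
          (q.totient : ℝ) / q ^ 2 * N1 * N2) : ℝ) : ℂ) := by
      have hqc : (q : ℂ) ≠ 0 := by exact_mod_cast hq
      push_cast
      field_simp
    rw [hc, Complex.norm_real, Real.norm_eq_abs, abs_mul,
      abs_of_pos (by positivity : (0 : ℝ) < q ^ 2)]
  refine le_of_mul_le_mul_left (a := (q : ℝ) ^ 2) ?_ (by positivity)
  rw [hnorm, hsplit]
  rw [show ∀ a b c d : ℂ, a + b + (c + d) - a = b + c + d by intros; ring]
  refine (norm_add₃_le).trans ?_
  linarith

end Completion

end Kloosterman

theorem box_count_asymptotic :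
    ∃ C : ℝ, 0 < C ∧ ∀ q : ℕ, 1 ≤ q → ∀ Q1 Q2 P1 P2 : ℝ,
      0 ≤ P1 → P1 ≤ q → 0 ≤ P2 → P2 ≤ q →
      |(boxCount q Q1 Q2 P1 P2 : ℝ) - (q.totient : ℝ) / q ^ 2 * P1 * P2| ≤
        C * q.divisors.card * Real.log (q + 1) ^ 2 * Real.sqrt q := by
  obtain ⟨Z, hZ0, hZ⟩ := Kloosterman.exists_sum_sqrt_div_sq_le
  refine ⟨18 * (Z + 1) + 8, by positivity, fun q hq Q1 Q2 P1 P2 h1 hP1 h2 hP2 => ?_⟩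
  have : NeZero q := ⟨by omega⟩
  have hmain := Kloosterman.abs_boxCount_sub_le hZ q Q1 Q2 hP1 hP2
  have ha1 := Kloosterman.abs_toNat_floor_sub_sub_le (Q := Q1) h1
  have ha2 := Kloosterman.abs_toNat_floor_sub_sub_le (Q := Q2) h2
  have hN2 := Kloosterman.toNat_floor_sub_le (Q := Q2) hP2
  set N1 := (⌊Q1 + P1⌋ - ⌊Q1⌋).toNat
  set N2 := (⌊Q2 + P2⌋ - ⌊Q2⌋).toNat
  have hq1 : (1 : ℝ) ≤ q := by exact_mod_cast hq
  have hq0 : (0 : ℝ) < q := by linarith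
  have hlog : 0 ≤ Real.log q := Real.log_nonneg hq1
  set ℓ := Real.log (q + 1) with hℓ
  have hℓ2 : 1 / 2 ≤ ℓ :=
    (by linarith [Real.log_two_gt_d9] : (1 : ℝ) / 2 ≤ Real.log 2).trans
      (Real.log_le_log two_pos (by linarith))
  have hL : 1 + Real.log q ≤ 3 * ℓ := by
    have : Real.log q ≤ ℓ := Real.log_le_log hq0 (by linarith)
    linarith
  have hσ : (1 : ℝ) ≤ q.divisors.card := by
    exact_mod_cast Finset.card_pos.mpr ⟨1, Nat.one_mem_divisors.mpr (by omega)⟩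
  have hsq : 1 ≤ √(q : ℝ) := Real.one_le_sqrt.mpr hq1
  have hround : |(q.totient : ℝ) / q ^ 2 * N1 * N2 - (q.totient : ℝ) / q ^ 2 * P1 * P2| ≤ 2 := by
    have hφ : (q.totient : ℝ) / q ^ 2 ≤ 1 / q := by
      rw [div_le_div_iff₀ (by positivity) hq0]
      have : (q.totient : ℝ) ≤ q := by exact_mod_cast Nat.totient_le q
      nlinarith
    have hdiff : |(N1 : ℝ) * N2 - P1 * P2| ≤ 2 * q := by
      rw [show (N1 : ℝ) * N2 - P1 * P2 = (N1 - P1) * N2 + P1 * (N2 - P2) by ring]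
      refine (abs_add_le _ _).trans ?_
      rw [abs_mul, abs_mul, abs_of_nonneg h1, Nat.abs_cast N2]
      have e1 : |(N1 : ℝ) - P1| * N2 ≤ 1 * q := by gcongr
      have e2 : P1 * |(N2 : ℝ) - P2| ≤ q * 1 := by gcongr
      linarith
    rw [mul_assoc, mul_assoc, ← mul_sub, abs_mul, abs_of_nonneg (by positivity)]
    calc _ ≤ 1 / (q : ℝ) * (2 * q) := by gcongr
      _ = 2 := by field_simp
  have hX : 1 ≤ (q.divisors.card : ℝ) * √q := one_le_mul_of_one_le_of_one_le hσ hsq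
  have hL2 : (1 + Real.log q) ^ 2 ≤ 9 * ℓ ^ 2 := by
    calc (1 + Real.log q) ^ 2 ≤ (3 * ℓ) ^ 2 := by gcongr
      _ = _ := by ring
  have hL1 : 1 + Real.log q ≤ 9 * ℓ ^ 2 := by nlinarith
  have t1 : 2 * (q.divisors.card : ℝ) * (1 + Real.log q) ≤
      2 * (q.divisors.card * √q) * (9 * ℓ ^ 2) := by
    gcongr
    exact le_mul_of_one_le_right (by positivity) hsq
  have t2 : 2 * (q.divisors.card : ℝ) * √q * ((1 + Real.log q) ^ 2 * Z) ≤
      2 * q.divisors.card * √q * (9 * ℓ ^ 2 * Z) := by gcongr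
  have t3 : (2 : ℝ) ≤ 8 * (q.divisors.card * √q) * ℓ ^ 2 := by nlinarith
  have htri := abs_sub_le (boxCount q Q1 Q2 P1 P2 : ℝ) ((q.totient : ℝ) / q ^ 2 * N1 * N2)
    ((q.totient : ℝ) / q ^ 2 * P1 * P2)
  calc _ ≤ _ := htri
    _ ≤ 2 * (q.divisors.card * √q) * (9 * ℓ ^ 2) +
        2 * q.divisors.card * √q * (9 * ℓ ^ 2 * Z) + 8 * (q.divisors.card * √q) * ℓ ^ 2 := by
      linarith
    _ = _ := by ring
end

section
/- Fix real parameters 0 < x1 ≤ 1 and 0 < x2, y1, y2 ≤ 1 with x2 ≤ y1·y2, and let N(R) = 2 Σ_{Q' ≥ R/y2} Σ_{1 ≤ Q ≤ min(x2 Q', y1 R), gcd(Q,Q')=1} x1/(Q'(Q' + x1 Q)). Then as R → ∞, N(R) = (2/ζ(2)) ( log(1 + x1 x2) log(y1 y2 / x2) - Li2(-x1 x2) ) + O(x1 log R / R). -/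
open Real

/-- The dilogarithm `Li₂(z) = ∑_{k ≥ 1} z^k / k²`. -/
noncomputable def Li2 (z : ℝ) : ℝ := ∑' k : ℕ, z ^ (k + 1) / ((k : ℝ) + 1) ^ 2

/-- `N(R) = 2 ∑_{Q' ≥ R/y₂} ∑_{1 ≤ Q ≤ min(x₂Q', y₁R), (Q,Q')=1} x₁/(Q'(Q'+x₁Q))`. -/
noncomputable def NN (x1 x2 y1 y2 R : ℝ) : ℝ :=
  2 * ∑' Q' : ℕ, if R / y2 ≤ (Q' : ℝ) then
    ∑ Q ∈ Finset.Icc 1 ⌊min (x2 * Q') (y1 * R)⌋₊,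
      if Nat.gcd Q Q' = 1 then x1 / ((Q' : ℝ) * ((Q' : ℝ) + x1 * Q)) else 0
  else 0

open Filter Topology

/-- The increments of `Φ` over `[s, t] ⊆ S` are those of a primitive of `-ψ`, with `ψ` bounded on
`[s, t]` by its values at the endpoints, as for a decreasing function. -/
def IsTailPrimitiveOn (ψ Φ : ℝ → ℝ) (S : Set ℝ) : Prop :=
  ∀ s ∈ S, ∀ t ∈ S, s ≤ t → (t - s) * ψ t ≤ Φ s - Φ t ∧ Φ s - Φ t ≤ (t - s) * ψ s

namespace IsTailPrimitiveOn

variable {ψ Φ : ℝ → ℝ} {S : Set ℝ} {a T : ℝ}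

lemma mono {S' : Set ℝ} (h : IsTailPrimitiveOn ψ Φ S) (hS : S' ⊆ S) :
    IsTailPrimitiveOn ψ Φ S' :=
  fun s hs t ht hst => h s (hS hs) t (hS ht) hst

lemma congr {ψ' Φ' : ℝ → ℝ} (h : IsTailPrimitiveOn ψ Φ S) (hψ : Set.EqOn ψ' ψ S)
    (hΦ : Set.EqOn Φ' Φ S) : IsTailPrimitiveOn ψ' Φ' S := by
  intro s hs t ht hst
  rw [hψ hs, hψ ht, hΦ hs, hΦ ht]
  exact h s hs t ht hst

lemma antitoneOn (h : IsTailPrimitiveOn ψ Φ S) : AntitoneOn ψ S := by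
  intro s hs t ht hst
  rcases hst.eq_or_lt with rfl | hlt
  · rfl
  · obtain ⟨h1, h2⟩ := h s hs t ht hst
    exact le_of_mul_le_mul_left (h1.trans h2) (sub_pos.2 hlt)

lemma of_hasDerivAt {b : ℝ} (hc : ContinuousOn Φ (Set.Icc a b))
    (hd : ∀ t ∈ Set.Ioo a b, HasDerivAt Φ (-ψ t) t) (hψ : AntitoneOn ψ (Set.Icc a b)) :
    IsTailPrimitiveOn ψ Φ (Set.Icc a b) := by
  intro s hs t ht hst
  rcases hst.eq_or_lt with rfl | hlt
  · simp
  · obtain ⟨c, hc', he⟩ := exists_hasDerivAt_eq_slope Φ (fun t => -ψ t) hlt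
      (hc.mono (Set.Icc_subset_Icc hs.1 ht.2))
      (fun x hx => hd x ⟨hs.1.trans_lt hx.1, hx.2.trans_le ht.2⟩)
    have hpos : 0 < t - s := sub_pos.2 hlt
    rw [eq_div_iff hpos.ne'] at he
    have hcm : c ∈ Set.Icc a b := ⟨hs.1.trans hc'.1.le, hc'.2.le.trans ht.2⟩
    have h1 := hψ hs hcm hc'.1.le
    have h2 := hψ hcm ht hc'.2.le
    constructor <;> nlinarith

lemma union (h₁ : IsTailPrimitiveOn ψ Φ (Set.Ioc 0 T)) (h₂ : IsTailPrimitiveOn ψ Φ (Set.Ici T))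
    (hT : 0 < T) : IsTailPrimitiveOn ψ Φ (Set.Ioi 0) := by
  intro s hs t ht hst
  rcases le_total t T with htT | htT
  · exact h₁ s ⟨hs, hst.trans htT⟩ t ⟨ht, htT⟩ hst
  rcases le_total s T with hsT | hsT
  · have hTm : T ∈ Set.Ioc 0 T := ⟨hT, le_rfl⟩
    obtain ⟨a1, a2⟩ := h₁ s ⟨hs, hsT⟩ T hTm hsT
    obtain ⟨b1, b2⟩ := h₂ T Set.self_mem_Ici t htT htT
    have c1 := h₁.antitoneOn ⟨hs, hsT⟩ hTm hsT
    have c2 := h₂.antitoneOn Set.self_mem_Ici htT htT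
    constructor <;> nlinarith
  · exact h₂ s hsT t htT hst

lemma nonneg (h : IsTailPrimitiveOn ψ Φ (Set.Ici a)) (hψ : ∀ t, a ≤ t → 0 ≤ ψ t)
    (hlim : Tendsto Φ atTop (𝓝 0)) {s : ℝ} (hs : a ≤ s) : 0 ≤ Φ s := by
  refine le_of_tendsto hlim ?_
  filter_upwards [eventually_ge_atTop s] with t ht
  have := (h s hs t (hs.trans ht) ht).1
  nlinarith [hψ t (hs.trans ht)]

/-- Comparison of a sum over the integers `n ≥ a` with a primitive of the summand. -/
lemma summable_and_abs_tsum_sub_le (h : IsTailPrimitiveOn ψ Φ (Set.Ici a))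
    (hψ : ∀ t, a ≤ t → 0 ≤ ψ t) (hlim : Tendsto Φ atTop (𝓝 0)) (ha : 0 ≤ a) :
    Summable (fun n : ℕ => if a ≤ n then ψ n else 0) ∧
      |∑' n : ℕ, (if a ≤ n then ψ n else 0) - Φ a| ≤ ψ a := by
  set f : ℕ → ℝ := fun n => if a ≤ n then ψ n else 0
  set k := ⌈a⌉₊
  have hak : a ≤ k := Nat.le_ceil a
  have hka : (k : ℝ) < a + 1 := Nat.ceil_lt_add_one ha
  have hmem : ∀ n : ℕ, a ≤ ((n + k : ℕ) : ℝ) := fun n => by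
    push_cast; linarith [(Nat.cast_nonneg n : (0 : ℝ) ≤ n)]
  have hshift : ∀ n, f (n + k) = ψ ((n + k : ℕ) : ℝ) := fun n => if_pos (hmem n)
  have hhead : ∑ i ∈ Finset.range k, f i = 0 := by
    refine Finset.sum_eq_zero fun i hi => if_neg ?_
    rw [not_le]
    exact Nat.lt_ceil.1 (Finset.mem_range.1 hi)
  have hstep : ∀ n : ℕ, ψ ((n + 1 + k : ℕ) : ℝ) ≤ Φ ((n + k : ℕ) : ℝ) - Φ ((n + 1 + k : ℕ) : ℝ) ∧
      Φ ((n + k : ℕ) : ℝ) - Φ ((n + 1 + k : ℕ) : ℝ) ≤ ψ ((n + k : ℕ) : ℝ) := fun n => by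
    have := h _ (hmem n) _ (hmem (n + 1)) (by push_cast; linarith)
    rwa [show ((n + 1 + k : ℕ) : ℝ) - ((n + k : ℕ) : ℝ) = 1 by push_cast; ring, one_mul,
      one_mul] at this
  have hupper : ∀ n, ∑ i ∈ Finset.range n, f (i + k) ≤ ψ k + Φ k := fun n => by
    have : ∑ i ∈ Finset.range n, f (i + k) + ψ ((n + k : ℕ) : ℝ) ≤
        ψ k + Φ k - Φ ((n + k : ℕ) : ℝ) := by
      induction n with
      | zero => simp
      | succ n ih =>
        rw [Finset.sum_range_succ, hshift]
        linarith [(hstep n).1]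
    linarith [hψ _ (hmem n), h.nonneg hψ hlim (hmem n)]
  have hlower : ∀ n, Φ k - Φ ((n + k : ℕ) : ℝ) ≤ ∑ i ∈ Finset.range n, f (i + k) := fun n => by
    induction n with
    | zero => simp
    | succ n ih =>
      rw [Finset.sum_range_succ, hshift]
      linarith [(hstep n).2]
  have hnn : ∀ n, 0 ≤ f (n + k) := fun n => by rw [hshift]; exact hψ _ (hmem n)
  have hs : Summable fun n => f (n + k) := summable_of_sum_range_le hnn hupper
  have hsf : Summable f := (summable_nat_add_iff k).1 hs
  have hts : ∑' n, f n = ∑' n, f (n + k) := by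
    rw [← hsf.sum_add_tsum_nat_add k, hhead, zero_add]
  have h1 : ∑' n, f (n + k) ≤ ψ k + Φ k := Real.tsum_le_of_sum_range_le hnn hupper
  have h2 : Φ k ≤ ∑' n, f (n + k) := by
    have e : Tendsto (fun n : ℕ => Φ k - Φ ((n + k : ℕ) : ℝ)) atTop (𝓝 (Φ k - 0)) :=
      tendsto_const_nhds.sub
        (hlim.comp (tendsto_natCast_atTop_atTop.comp (tendsto_add_atTop_nat k)))
    rw [sub_zero] at e
    exact le_of_tendsto_of_tendsto' e hs.hasSum.tendsto_sum_nat hlower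
  obtain ⟨h3, h4⟩ := h a Set.self_mem_Ici k hak hak
  have h5 := h.antitoneOn Set.self_mem_Ici hak hak
  have h6 := hψ k hak
  have h7 := hψ a le_rfl
  refine ⟨hsf, ?_⟩
  rw [hts, abs_le]
  constructor <;> nlinarith

end IsTailPrimitiveOn

lemma summable_and_tsum_inv_sq_le {a : ℝ} (ha : 1 ≤ a) :
    Summable (fun n : ℕ => if a ≤ n then 1 / (n : ℝ) ^ 2 else 0) ∧
      ∑' n : ℕ, (if a ≤ n then 1 / (n : ℝ) ^ 2 else 0) ≤ 2 / a := by
  have h : IsTailPrimitiveOn (fun t => 1 / t ^ 2) (fun t => 1 / t) (Set.Ici a) := by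
    intro s hs t ht hst
    have hs' : 0 < s := by linarith [Set.mem_Ici.1 hs]
    have ht' : 0 < t := hs'.trans_le hst
    have e : 1 / s - 1 / t = (t - s) * (1 / (s * t)) := by field_simp
    have h0 : 0 ≤ t - s := sub_nonneg.2 hst
    simp only [e]
    constructor <;> refine mul_le_mul_of_nonneg_left (one_div_le_one_div_of_le ?_ ?_) h0 <;>
      first | positivity | nlinarith
  obtain ⟨h1, h2⟩ := h.summable_and_abs_tsum_sub_le (fun t _ => by positivity)
    (by simpa using tendsto_inv_atTop_zero (𝕜 := ℝ)) (by linarith)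
  refine ⟨h1, ?_⟩
  have h3 := (abs_le.1 h2).2
  have h4 : 1 / a ^ 2 ≤ 1 / a := one_div_le_one_div_of_le (by linarith) (by nlinarith)
  have h5 : 2 / a = 1 / a + 1 / a := by ring
  linarith

lemma Li2_hasDerivAt {z : ℝ} (hz : |z| < 1) (hz0 : z ≠ 0) :
    HasDerivAt Li2 (-Real.log (1 - z) / z) z := by
  obtain ⟨ρ, hρ, hρ1⟩ := exists_between hz
  have hρ0 : 0 ≤ ρ := (abs_nonneg z).trans hρ.le
  have hsum : ∑' k : ℕ, z ^ k / ((k : ℝ) + 1) = -Real.log (1 - z) / z := by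
    have := (Real.hasSum_pow_div_log_of_abs_lt_one hz).div_const z
    rw [← this.tsum_eq]
    refine tsum_congr fun k => ?_
    have : (k : ℝ) + 1 ≠ 0 := by positivity
    field_simp
    ring
  rw [← hsum]
  refine hasDerivAt_tsum_of_isPreconnected (u := fun k : ℕ => ρ ^ k)
    (g := fun (k : ℕ) (z : ℝ) => z ^ (k + 1) / ((k : ℝ) + 1) ^ 2)
    (g' := fun (k : ℕ) (z : ℝ) => z ^ k / ((k : ℝ) + 1))
    (t := Metric.ball 0 ρ) (y₀ := 0)
    (summable_geometric_of_lt_one hρ0 hρ1) Metric.isOpen_ball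
    (convex_ball _ _).isPreconnected ?_ ?_ ?_ ?_ ?_
  · intro k y _
    refine ((hasDerivAt_pow (k + 1) y).div_const (((k : ℝ) + 1) ^ 2)).congr_deriv ?_
    have : (k : ℝ) + 1 ≠ 0 := by positivity
    rw [Nat.add_sub_cancel, Nat.cast_add_one,
      div_eq_div_iff (pow_ne_zero 2 this) this]
    ring
  · intro k y hy
    rw [Metric.mem_ball, dist_zero_right] at hy
    rw [norm_div, norm_pow]
    have h1 : (1 : ℝ) ≤ ‖(k : ℝ) + 1‖ := by
      rw [Real.norm_of_nonneg (by positivity)]; linarith [(Nat.cast_nonneg k : (0 : ℝ) ≤ k)]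
    calc ‖y‖ ^ k / ‖(k : ℝ) + 1‖ ≤ ‖y‖ ^ k := div_le_self (by positivity) h1
      _ ≤ ρ ^ k := pow_le_pow_left₀ (norm_nonneg _) hy.le k
  · simpa using (abs_nonneg z).trans_lt hρ
  · simp
  · simpa using hρ

lemma Li2_continuousOn : ContinuousOn Li2 (Set.Icc (-1) 1) := by
  have hsum : Summable fun k : ℕ => 1 / ((k + 1 : ℕ) : ℝ) ^ 2 :=
    (summable_nat_add_iff (f := fun k : ℕ => 1 / (k : ℝ) ^ 2) 1).2
      (Real.summable_one_div_nat_pow.2 one_lt_two)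
  refine continuousOn_tsum (fun k => by fun_prop) hsum ?_
  intro k x hx
  have hx' : |x| ≤ 1 := abs_le.2 hx
  rw [norm_div, norm_pow, norm_pow, Real.norm_eq_abs, Real.norm_of_nonneg (by positivity)]
  push_cast
  gcongr
  exact pow_le_one₀ (abs_nonneg x) hx'

lemma Li2_zero : Li2 0 = 0 := by simp [Li2]

lemma log_sub_log_bounds {u v : ℝ} (hu : 0 < u) (huv : u ≤ v) :
    (v - u) / v ≤ Real.log v - Real.log u ∧ Real.log v - Real.log u ≤ (v - u) / u := by
  have hv : 0 < v := hu.trans_le huv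
  constructor
  · have := Real.log_le_sub_one_of_pos (div_pos hu hv)
    rw [Real.log_div hu.ne' hv.ne'] at this
    have e : (v - u) / v = 1 - u / v := by field_simp
    linarith
  · have := Real.log_le_sub_one_of_pos (div_pos hv hu)
    rw [Real.log_div hv.ne' hu.ne'] at this
    have e : (v - u) / u = v / u - 1 := by field_simp
    linarith

/-- `log (1 + b min(1, T/t)) / t` and its tail integral. -/
lemma isTailPrimitiveOn_log_Li2 {b T : ℝ} (hb : 0 < b) (hb1 : b ≤ 1) (hT : 0 < T) :
    IsTailPrimitiveOn (fun t => Real.log (1 + b * min 1 (T / t)) / t)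
      (fun t => Real.log (1 + b) * Real.log (max 1 (T / t)) - Li2 (-(b * min 1 (T / t))))
      (Set.Ioi 0) := by
  have hlog : 0 < Real.log (1 + b) := Real.log_pos (by linarith)
  refine IsTailPrimitiveOn.union (T := T) ?_ ?_ hT
  · have h : IsTailPrimitiveOn (fun t => Real.log (1 + b) / t)
        (fun t => Real.log (1 + b) * (Real.log T - Real.log t) - Li2 (-b)) (Set.Ioc 0 T) := by
      intro s hs t ht hst
      obtain ⟨h1, h2⟩ := log_sub_log_bounds hs.1 hst
      have e1 : (t - s) * (Real.log (1 + b) / t) = Real.log (1 + b) * ((t - s) / t) := by ring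
      have e2 : (t - s) * (Real.log (1 + b) / s) = Real.log (1 + b) * ((t - s) / s) := by ring
      simp only [e1, e2]
      constructor <;> nlinarith
    refine h.congr (fun t ht => ?_) (fun t ht => ?_)
    · have : 1 ≤ T / t := (one_le_div ht.1).2 ht.2
      simp [min_eq_left this]
    · have : 1 ≤ T / t := (one_le_div ht.1).2 ht.2
      simp only [min_eq_left this, max_eq_right this, mul_one]
      rw [Real.log_div hT.ne' ht.1.ne']
  · have h : IsTailPrimitiveOn (fun t => Real.log (1 + b * (T / t)) / t)
        (fun t => - Li2 (-(b * (T / t)))) (Set.Ici T) := by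
      intro s hs t ht hst
      refine IsTailPrimitiveOn.of_hasDerivAt (a := T) (b := t)
        (ψ := fun t => Real.log (1 + b * (T / t)) / t) (Φ := fun t => - Li2 (-(b * (T / t))))
        ?_ ?_ ?_ s ⟨hs, hst⟩ t
        ⟨ht, le_rfl⟩ hst
      · have hc : ContinuousOn (fun t => -(b * (T / t))) (Set.Icc T t) := by
          refine (continuousOn_const.mul (continuousOn_const.div continuousOn_id ?_)).neg
          intro x hx
          exact (hT.trans_le hx.1).ne'
        refine (Li2_continuousOn.comp hc ?_).neg
        intro x hx
        have hx0 : 0 < x := hT.trans_le hx.1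
        have h1 : T / x ≤ 1 := (div_le_one hx0).2 hx.1
        have h2 : 0 < T / x := by positivity
        constructor <;> nlinarith
      · intro x hx
        have hx0 : 0 < x := hT.trans hx.1
        have h1 : T / x < 1 := (div_lt_one hx0).2 hx.1
        have h2 : 0 < T / x := by positivity
        have h3 : b * (T / x) < 1 := by nlinarith
        have h4 : 0 < b * (T / x) := by positivity
        have hd : HasDerivAt (fun t => -(b * (T / t))) (b * (T / x ^ 2)) x := by
          refine (((hasDerivAt_inv hx0.ne').const_mul T).const_mul b).fun_neg.congr_deriv ?_
          field_simp
        have hL := (Li2_hasDerivAt (z := -(b * (T / x))) (by rwa [abs_neg, abs_of_pos h4])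
          (neg_ne_zero.2 h4.ne')).comp x hd
        refine hL.fun_neg.congr_deriv ?_
        rw [sub_neg_eq_add]
        field_simp
      · intro u hu v hv huv
        have hu0 : 0 < u := hT.trans_le hu.1
        have hv0 : 0 < v := hT.trans_le hv.1
        have h0 : 0 ≤ Real.log (1 + b * (T / v)) := Real.log_nonneg (by
          have : 0 < b * (T / v) := by positivity
          linarith)
        have : 0 < b * (T / v) := by positivity
        have hmono : Real.log (1 + b * (T / v)) ≤ Real.log (1 + b * (T / u)) := by gcongr
        exact div_le_div₀ (h0.trans hmono) hmono hu0 huv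
    refine h.congr (fun t ht => ?_) (fun t ht => ?_)
    · have : T / t ≤ 1 := (div_le_one (hT.trans_le ht)).2 ht
      simp only [min_eq_right this]
    · have : T / t ≤ 1 := (div_le_one (hT.trans_le ht)).2 ht
      simp [min_eq_right this, max_eq_left this]

lemma tendsto_log_Li2_atTop {b T : ℝ} (hT : 0 < T) :
    Tendsto (fun t => Real.log (1 + b) * Real.log (max 1 (T / t)) - Li2 (-(b * min 1 (T / t))))
      atTop (𝓝 0) := by
  have hz : Tendsto (fun t : ℝ => -(b * (T / t))) atTop (𝓝 0) := by
    have := ((tendsto_const_nhds (x := T)).div_atTop tendsto_id).const_mul b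
    simpa using this.neg
  have hL : Tendsto (fun t : ℝ => -Li2 (-(b * (T / t)))) atTop (𝓝 0) := by
    have hc : ContinuousAt Li2 0 := Li2_continuousOn.continuousAt (Icc_mem_nhds (by norm_num)
      (by norm_num))
    have := (hc.tendsto.comp hz).neg
    simpa [Li2_zero] using this
  refine hL.congr' ?_
  filter_upwards [eventually_ge_atTop T] with t ht
  have : T / t ≤ 1 := (div_le_one (hT.trans_le ht)).2 ht
  simp [min_eq_right this, max_eq_left this]

lemma abs_sum_one_div_sub_log_le {x : ℝ} (hx : 0 < x) {n : ℕ} (hn : 1 ≤ n) {X : ℝ} (hX : 0 ≤ X) :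
    |∑ m ∈ Finset.Icc 1 ⌊X⌋₊, x / ((n : ℝ) * ((n : ℝ) + x * m)) -
      Real.log (1 + x * (X / n)) / n| ≤ x * (1 / (n : ℝ) ^ 2) := by
  have hn0 : (0 : ℝ) < n := by exact_mod_cast hn
  have hstep : ∀ m : ℕ, x / ((n : ℝ) + x * (m + 1 : ℕ)) ≤
      Real.log (n + x * (m + 1 : ℕ)) - Real.log (n + x * m) ∧
      Real.log (n + x * (m + 1 : ℕ)) - Real.log (n + x * m) ≤ x / ((n : ℝ) + x * m) := fun m => by
    have := log_sub_log_bounds (u := n + x * m) (v := n + x * (m + 1 : ℕ)) (by positivity)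
      (by push_cast; nlinarith)
    rwa [show (n : ℝ) + x * (m + 1 : ℕ) - (n + x * m) = x by push_cast; ring] at this
  have hmul : ∑ m ∈ Finset.Icc 1 ⌊X⌋₊, x / ((n : ℝ) * ((n : ℝ) + x * m)) =
      (∑ m ∈ Finset.Icc 1 ⌊X⌋₊, x / ((n : ℝ) + x * m)) / n := by
    rw [Finset.sum_div]
    refine Finset.sum_congr rfl fun m _ => ?_
    rw [div_div, mul_comm]
  have hupper : ∀ M : ℕ, ∑ m ∈ Finset.Icc 1 M, x / ((n : ℝ) + x * m) ≤
      Real.log (n + x * M) - Real.log n := fun M => by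
    induction M with
    | zero => simp
    | succ M ih =>
      rw [Finset.sum_Icc_succ_top (by omega)]
      linarith [(hstep M).1]
  have hlower : ∀ M : ℕ, Real.log (n + x * (M + 1 : ℕ)) - Real.log (n + x * (0 + 1 : ℕ)) ≤
      ∑ m ∈ Finset.Icc 1 M, x / ((n : ℝ) + x * m) := fun M => by
    induction M with
    | zero => simp
    | succ M ih =>
      rw [Finset.sum_Icc_succ_top (by omega)]
      linarith [(hstep (M + 1)).2]
  have h0 := (hstep 0).2
  have hl := hlower ⌊X⌋₊
  have hu := hupper ⌊X⌋₊
  have hlog : Real.log (1 + x * (X / n)) = Real.log (n + x * X) - Real.log n := by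
    rw [← Real.log_div (by positivity) hn0.ne']
    congr 1
    field_simp
  have hfl : Real.log (n + x * ⌊X⌋₊) ≤ Real.log (n + x * X) := by
    have := Nat.floor_le hX
    gcongr
  have hfu : Real.log (n + x * X) ≤ Real.log (n + x * (⌊X⌋₊ + 1 : ℕ)) := by
    have := (Nat.lt_floor_add_one X).le
    push_cast
    gcongr
  have e : x * (1 / (n : ℝ) ^ 2) = x / n / n := by field_simp
  rw [hmul, hlog, ← sub_div, abs_div, abs_of_pos hn0, e]
  refine div_le_div_of_nonneg_right (abs_le.2 ?_) hn0.le
  simp only [Nat.cast_zero, mul_zero, add_zero] at h0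
  have : 0 ≤ x / n := by positivity
  constructor <;> linarith

/-- The term of the lattice sum at `p = (Q', Q)`, extended by zero off the region of summation. -/
noncomputable def latticeTerm (x1 x2 y1 y2 r : ℝ) (p : ℕ × ℕ) : ℝ :=
  if r / y2 ≤ p.1 ∧ 1 ≤ p.2 ∧ (p.2 : ℝ) ≤ min (x2 * p.1) (y1 * r) then
    x1 / ((p.1 : ℝ) * ((p.1 : ℝ) + x1 * p.2)) else 0

section LatticeSum

variable {x1 x2 y1 y2 : ℝ}

lemma tsum_latticeTerm_row (r : ℝ) (w : ℕ → ℝ) (n : ℕ) :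
    ∑' m, latticeTerm x1 x2 y1 y2 r (n, m) * w m =
      if r / y2 ≤ (n : ℝ) then ∑ m ∈ Finset.Icc 1 ⌊min (x2 * n) (y1 * r)⌋₊,
        x1 / ((n : ℝ) * ((n : ℝ) + x1 * m)) * w m else 0 := by
  split_ifs with h
  · have hmem : ∀ m : ℕ, m ∈ Finset.Icc 1 ⌊min (x2 * n) (y1 * r)⌋₊ ↔
        1 ≤ m ∧ (m : ℝ) ≤ min (x2 * n) (y1 * r) := fun m => by
      rw [Finset.mem_Icc]
      exact and_congr_right fun hm => Nat.le_floor_iff' (by omega)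
    rw [tsum_eq_sum (s := Finset.Icc 1 ⌊min (x2 * n) (y1 * r)⌋₊)]
    · refine Finset.sum_congr rfl fun m hm => ?_
      rw [latticeTerm, if_pos ⟨h, (hmem m).1 hm⟩]
    · intro m hm
      rw [latticeTerm, if_neg fun hc => hm ((hmem m).2 hc.2), zero_mul]
  · simp [latticeTerm, h]

lemma latticeTerm_nonneg (hx1 : 0 ≤ x1) (r : ℝ) (p : ℕ × ℕ) :
    0 ≤ latticeTerm x1 x2 y1 y2 r p := by
  rw [latticeTerm]
  split_ifs <;> positivity

lemma summable_latticeTerm (hx1 : 0 ≤ x1) (r : ℝ) :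
    Summable (latticeTerm x1 x2 y1 y2 r) := by
  have h1 : Summable fun n : ℕ => x1 * (1 / (n : ℝ) ^ 2) :=
    (Real.summable_one_div_nat_pow.2 one_lt_two).mul_left x1
  have h2 : Summable fun m : ℕ => if m ∈ Finset.range (⌊y1 * r⌋₊ + 1) then (1 : ℝ) else 0 :=
    summable_of_ne_finset_zero (s := Finset.range (⌊y1 * r⌋₊ + 1)) fun m hm => if_neg hm
  refine Summable.of_nonneg_of_le (latticeTerm_nonneg hx1 r) ?_
    (h1.mul_of_nonneg h2 (fun n => by positivity) fun m => by positivity)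
  rintro ⟨n, m⟩
  rw [latticeTerm]
  by_cases h : r / y2 ≤ (n : ℝ) ∧ 1 ≤ m ∧ (m : ℝ) ≤ min (x2 * n) (y1 * r)
  · rw [if_pos h]
    obtain ⟨-, hm, hle⟩ := h
    have hmem : m ∈ Finset.range (⌊y1 * r⌋₊ + 1) := by
      rw [Finset.mem_range, Nat.lt_succ_iff]
      exact Nat.le_floor (hle.trans (min_le_right _ _))
    rw [if_pos hmem, mul_one]
    rcases Nat.eq_zero_or_pos n with rfl | hn
    · simp
    have hn0 : (0 : ℝ) < n := by exact_mod_cast hn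
    rw [mul_one_div, sq]
    have : 0 ≤ x1 * (m : ℝ) := by positivity
    simp only
    gcongr
    linarith
  · rw [if_neg h]
    positivity

lemma latticeTerm_mul (r : ℝ) {d : ℕ} (hd : 1 ≤ d) (n m : ℕ) :
    latticeTerm x1 x2 y1 y2 r (d * n, d * m) =
      1 / (d : ℝ) ^ 2 * latticeTerm x1 x2 y1 y2 (r / d) (n, m) := by
  have hd0 : (0 : ℝ) < d := by exact_mod_cast hd
  have e1 : r / y2 ≤ ((d * n : ℕ) : ℝ) ↔ r / d / y2 ≤ (n : ℝ) := by
    rw [div_right_comm, div_le_iff₀ hd0]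
    push_cast
    rw [mul_comm]
  have e2 : 1 ≤ d * m ↔ 1 ≤ m := by
    simp only [Nat.one_le_iff_ne_zero, mul_ne_zero_iff]
    exact and_iff_right (by omega)
  have e3 : ((d * m : ℕ) : ℝ) ≤ min (x2 * (d * n : ℕ)) (y1 * r) ↔
      (m : ℝ) ≤ min (x2 * n) (y1 * (r / d)) := by
    rw [le_min_iff, le_min_iff, mul_div_assoc', le_div_iff₀ hd0]
    push_cast
    rw [mul_left_comm x2, mul_le_mul_iff_right₀ hd0, mul_comm (d : ℝ) m]
  simp only [latticeTerm, e1, e2, e3, mul_ite, mul_zero]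
  congr 1
  push_cast
  rw [one_div_mul_eq_div, div_div]
  congr 1
  ring

/-- The sum over all lattice points of the region is its main term up to `O(1 / r)`. -/
lemma abs_tsum_latticeTerm_sub_le (hx1 : 0 < x1) (hx1' : x1 ≤ 1) (hx2 : 0 < x2) (hx2' : x2 ≤ 1)
    (hy1 : 0 < y1) (hy1' : y1 ≤ 1) (hy2 : 0 < y2) (hy2' : y2 ≤ 1) (hcase : x2 ≤ y1 * y2)
    {r : ℝ} (hr : 1 ≤ y1 * r) :
    |∑' p, latticeTerm x1 x2 y1 y2 r p -
      (Real.log (1 + x1 * x2) * Real.log (y1 * y2 / x2) - Li2 (-(x1 * x2)))| ≤ 3 * x1 / r := by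
  have hr0 : 0 < r := by
    by_contra! h
    nlinarith
  have hr1 : 1 ≤ r := by nlinarith
  set a := r / y2 with ha
  have hra : r ≤ a := le_div_self hr0.le hy2 hy2'
  have ha0 : 0 < a := hr0.trans_le hra
  set b := x1 * x2 with hb
  have hb0 : 0 < b := by positivity
  have hb1 : b ≤ 1 := by nlinarith
  set T := y1 * r / x2 with hT
  have hT0 : 0 < T := by positivity
  have hTa : T / a = y1 * y2 / x2 := by
    rw [hT, ha]; field_simp
  have hTa1 : 1 ≤ y1 * y2 / x2 := (one_le_div hx2).2 hcase
  set ψ : ℝ → ℝ := fun t => Real.log (1 + b * min 1 (T / t)) / t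
  obtain ⟨s1, b1⟩ := ((isTailPrimitiveOn_log_Li2 hb0 hb1 hT0).mono
    (Set.Ici_subset_Ioi.2 ha0)).summable_and_abs_tsum_sub_le (fun t ht => by
      have ht0 : 0 < t := ha0.trans_le ht
      refine div_nonneg (Real.log_nonneg ?_) ht0.le
      have : 0 ≤ b * min 1 (T / t) := by positivity
      linarith) (tendsto_log_Li2_atTop hT0) ha0.le
  simp only [hTa, min_eq_left hTa1, max_eq_right hTa1, mul_one] at b1
  change Summable fun n : ℕ => if a ≤ (n : ℝ) then ψ n else 0 at s1
  change |∑' n : ℕ, (if a ≤ (n : ℝ) then ψ n else 0) - _| ≤ _ at b1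
  obtain ⟨s2, b2⟩ := summable_and_tsum_inv_sq_le (hr1.trans hra)
  have s3 := s2.mul_left x1
  set rowSum : ℕ → ℝ := fun n => if a ≤ (n : ℝ) then
    ∑ m ∈ Finset.Icc 1 ⌊min (x2 * n) (y1 * r)⌋₊, x1 / ((n : ℝ) * ((n : ℝ) + x1 * m)) else 0
    with hrow
  have hS : ∑' p, latticeTerm x1 x2 y1 y2 r p = ∑' n, rowSum n := by
    rw [(summable_latticeTerm hx1.le r).tsum_prod]
    refine tsum_congr fun n => ?_
    simpa using tsum_latticeTerm_row (x1 := x1) (x2 := x2) (y1 := y1) (y2 := y2) r (fun _ => 1) n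
  have hdiff : ∀ n : ℕ, ‖rowSum n - (if a ≤ (n : ℝ) then ψ n else 0)‖ ≤
      x1 * (if a ≤ (n : ℝ) then 1 / (n : ℝ) ^ 2 else 0) := fun n => by
    rw [Real.norm_eq_abs]
    simp only [hrow]
    split_ifs with h
    · have hn0 : (0 : ℝ) < n := ha0.trans_le h
      have hX : x1 * (min (x2 * n) (y1 * r) / n) = b * min 1 (T / n) := by
        rw [hb, hT, mul_assoc, ← min_div_div_right hn0.le, mul_min_of_nonneg 1 _ hx2.le]
        congr 2 <;> field_simp
      have := abs_sum_one_div_sub_log_le hx1 (n := n) (by exact_mod_cast hn0)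
        (X := min (x2 * n) (y1 * r)) (by positivity)
      rwa [hX] at this
    · simp
  have s4 : Summable fun n : ℕ => rowSum n - (if a ≤ (n : ℝ) then ψ n else 0) :=
    .of_norm_bounded s3 hdiff
  have s5 : Summable rowSum := by simpa using s4.add s1
  have b3 : |∑' n, rowSum n - ∑' n : ℕ, (if a ≤ (n : ℝ) then ψ n else 0)| ≤ x1 * (2 / a) := by
    rw [← s5.tsum_sub s1]
    refine (tsum_of_norm_bounded s3.hasSum hdiff).trans ?_
    rw [tsum_mul_left]
    gcongr
  have b4 : Real.log (1 + b) / a ≤ x1 / a := by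
    have := Real.log_le_sub_one_of_pos (x := 1 + b) (by linarith)
    gcongr
    nlinarith
  have b5 : 3 * x1 / a ≤ 3 * x1 / r := by gcongr
  have e : 3 * x1 / a = x1 * (2 / a) + x1 / a := by ring
  rw [hS]
  refine (abs_sub_le _ (∑' n : ℕ, (if a ≤ (n : ℝ) then ψ n else 0)) _).trans ?_
  linarith

end LatticeSum

section Moebius

open ArithmeticFunction

lemma sum_divisors_moebius (g : ℕ) :
    ∑ d ∈ g.divisors, (moebius d : ℝ) = if g = 1 then 1 else 0 := by
  have h : ((moebius * (zeta : ArithmeticFunction ℤ) : ArithmeticFunction ℤ)) g =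
      (1 : ArithmeticFunction ℤ) g := by rw [moebius_mul_coe_zeta]
  rw [coe_mul_zeta_apply, one_apply] at h
  exact_mod_cast h

lemma ite_gcd_eq_one_eq_sum_moebius {n m D : ℕ} (hm : 1 ≤ m) (hD : m ≤ D) :
    (if Nat.gcd m n = 1 then (1 : ℝ) else 0) =
      ∑ d ∈ Finset.Icc 1 D, if d ∣ n ∧ d ∣ m then (moebius d : ℝ) else 0 := by
  have hg : Nat.gcd m n ≠ 0 := (Nat.gcd_pos_of_pos_left n hm).ne'
  rw [← sum_divisors_moebius, ← Finset.sum_filter]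
  refine Finset.sum_congr ?_ fun _ _ => rfl
  ext d
  simp only [Nat.mem_divisors, Finset.mem_filter, Finset.mem_Icc, Nat.dvd_gcd_iff]
  constructor
  · rintro ⟨⟨h1, h2⟩, -⟩
    exact ⟨⟨Nat.pos_of_dvd_of_pos h1 hm, (Nat.le_of_dvd hm h1).trans hD⟩, h2, h1⟩
  · rintro ⟨-, h2, h1⟩
    exact ⟨⟨h1, h2⟩, hg⟩

lemma abs_moebius_div_sq_le (d : ℕ) : ‖(moebius d : ℝ) / (d : ℝ) ^ 2‖ ≤ 1 / (d : ℝ) ^ 2 := by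
  rw [norm_div, Real.norm_of_nonneg (sq_nonneg (d : ℝ)), Real.norm_eq_abs]
  gcongr
  exact_mod_cast abs_moebius_le_one

lemma summable_moebius_div_sq : Summable fun d : ℕ => (moebius d : ℝ) / (d : ℝ) ^ 2 :=
  .of_norm_bounded (Real.summable_one_div_nat_pow.2 one_lt_two) abs_moebius_div_sq_le

lemma tsum_moebius_div_sq : ∑' d : ℕ, (moebius d : ℝ) / (d : ℝ) ^ 2 = 1 / (π ^ 2 / 6) := by
  have hs : (1 : ℝ) < (2 : ℂ).re := by norm_num
  have h := LSeries_zeta_mul_Lseries_moebius hs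
  rw [LSeries_zeta_eq_riemannZeta hs, riemannZeta_two] at h
  have hL : LSeries (fun n => ((moebius n : ℤ) : ℂ)) 2 =
      ((∑' d : ℕ, (moebius d : ℝ) / (d : ℝ) ^ 2 : ℝ) : ℂ) := by
    rw [LSeries, Complex.ofReal_tsum]
    refine tsum_congr fun d => ?_
    rcases eq_or_ne d 0 with rfl | hd
    · simp
    · rw [LSeries.term_of_ne_zero hd]
      push_cast
      norm_cast
  rw [hL] at h
  have h' : π ^ 2 / 6 * ∑' d : ℕ, (moebius d : ℝ) / (d : ℝ) ^ 2 = 1 := by exact_mod_cast h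
  rw [eq_div_iff (by positivity), mul_comm]
  exact h'

lemma abs_sum_moebius_div_sq_sub_le (D : ℕ) :
    |∑ d ∈ Finset.Icc 1 D, (moebius d : ℝ) / (d : ℝ) ^ 2 - 1 / (π ^ 2 / 6)| ≤
      2 / ((D : ℝ) + 1) := by
  obtain ⟨s, hle⟩ := summable_and_tsum_inv_sq_le (a := (D : ℝ) + 1)
    (by linarith [(Nat.cast_nonneg D : (0 : ℝ) ≤ D)])
  have hsum : ∑ d ∈ Finset.Icc 1 D, (moebius d : ℝ) / (d : ℝ) ^ 2 =
      ∑' d : ℕ, if d ∈ Finset.Icc 1 D then (moebius d : ℝ) / (d : ℝ) ^ 2 else 0 := by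
    rw [tsum_eq_sum (s := Finset.Icc 1 D) fun d hd => if_neg hd]
    exact Finset.sum_congr rfl fun d hd => (if_pos hd).symm
  have s' : Summable fun d : ℕ =>
      if d ∈ Finset.Icc 1 D then (moebius d : ℝ) / (d : ℝ) ^ 2 else 0 :=
    summable_of_ne_finset_zero (s := Finset.Icc 1 D) fun d hd => if_neg hd
  rw [← tsum_moebius_div_sq, hsum, ← s'.tsum_sub summable_moebius_div_sq]
  refine le_trans (tsum_of_norm_bounded (E := ℝ) s.hasSum fun d => ?_) hle
  by_cases hd : d ∈ Finset.Icc 1 D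
  · rw [if_pos hd, sub_self, norm_zero]
    positivity
  · rw [if_neg hd, zero_sub, norm_neg]
    rw [Finset.mem_Icc, not_and_or, not_le, not_le, Nat.lt_one_iff] at hd
    rcases hd with rfl | hd
    · simp only [Nat.cast_zero]
      split_ifs <;> simp
    · rw [if_pos (by exact_mod_cast hd)]
      exact abs_moebius_div_sq_le d

variable {x1 x2 y1 y2 : ℝ}

lemma NN_eq_sum_moebius (hx1 : 0 ≤ x1) (R : ℝ) :
    NN x1 x2 y1 y2 R = 2 * ∑ d ∈ Finset.Icc 1 ⌊y1 * R⌋₊,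
      (moebius d : ℝ) / (d : ℝ) ^ 2 * ∑' p, latticeTerm x1 x2 y1 y2 (R / d) p := by
  set D := ⌊y1 * R⌋₊
  set G := latticeTerm x1 x2 y1 y2 R with hG
  have hGs : Summable G := summable_latticeTerm hx1 R
  have hcop : Summable fun p : ℕ × ℕ => G p * if Nat.gcd p.2 p.1 = 1 then (1 : ℝ) else 0 := by
    refine .of_norm_bounded hGs fun p => ?_
    rw [norm_mul, Real.norm_of_nonneg (latticeTerm_nonneg hx1 R p)]
    refine mul_le_of_le_one_right (latticeTerm_nonneg hx1 R p) ?_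
    split_ifs <;> simp
  have hdiv : ∀ d : ℕ, Summable fun p : ℕ × ℕ =>
      (moebius d : ℝ) * if d ∣ p.1 ∧ d ∣ p.2 then G p else 0 := fun d => by
    refine .mul_left _ (.of_norm_bounded hGs fun p => ?_)
    split_ifs
    · rw [Real.norm_of_nonneg (latticeTerm_nonneg hx1 R p)]
    · simpa using latticeTerm_nonneg hx1 R p
  have hpoint : ∀ p : ℕ × ℕ, (G p * if Nat.gcd p.2 p.1 = 1 then (1 : ℝ) else 0) =
      ∑ d ∈ Finset.Icc 1 D, (moebius d : ℝ) * if d ∣ p.1 ∧ d ∣ p.2 then G p else 0 := by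
    intro p
    by_cases hp : R / y2 ≤ p.1 ∧ 1 ≤ p.2 ∧ (p.2 : ℝ) ≤ min (x2 * p.1) (y1 * R)
    · rw [ite_gcd_eq_one_eq_sum_moebius hp.2.1
        (Nat.le_floor (hp.2.2.trans (min_le_right _ _))), Finset.mul_sum]
      refine Finset.sum_congr rfl fun d _ => ?_
      split_ifs <;> ring
    · have : G p = 0 := if_neg hp
      simp [this]
  have hscale : ∀ d ∈ Finset.Icc 1 D, ∑' p : ℕ × ℕ, (if d ∣ p.1 ∧ d ∣ p.2 then G p else 0) =
      1 / (d : ℝ) ^ 2 * ∑' p, latticeTerm x1 x2 y1 y2 (R / d) p := by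
    intro d hd
    have hd1 : 1 ≤ d := (Finset.mem_Icc.1 hd).1
    have hinj : Function.Injective fun p : ℕ × ℕ => (d * p.1, d * p.2) := by
      rintro ⟨a, b⟩ ⟨a', b'⟩ h
      simp only [Prod.mk.injEq, Nat.mul_right_inj (show d ≠ 0 by omega)] at h
      exact Prod.ext h.1 h.2
    rw [← hinj.tsum_eq, ← tsum_mul_left]
    · refine tsum_congr fun p => ?_
      rw [if_pos ⟨dvd_mul_right _ _, dvd_mul_right _ _⟩]
      exact latticeTerm_mul R hd1 p.1 p.2
    · intro p hp
      have : d ∣ p.1 ∧ d ∣ p.2 := by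
        by_contra hc
        exact hp (if_neg hc)
      obtain ⟨⟨a, ha⟩, ⟨b, hb⟩⟩ := this
      exact ⟨(a, b), Prod.ext ha.symm hb.symm⟩
  have hNN : NN x1 x2 y1 y2 R =
      2 * ∑' p : ℕ × ℕ, G p * if Nat.gcd p.2 p.1 = 1 then (1 : ℝ) else 0 := by
    rw [NN, hcop.tsum_prod]
    congr 1
    refine tsum_congr fun n => ?_
    rw [hG, tsum_latticeTerm_row R (fun m => if Nat.gcd m n = 1 then (1 : ℝ) else 0) n]
    simp only [mul_ite, mul_one, mul_zero]
  rw [hNN, tsum_congr hpoint, Summable.tsum_finsetSum fun d _ => hdiv d]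
  congr 1
  refine Finset.sum_congr rfl fun d hd => ?_
  rw [tsum_mul_left, hscale d hd]
  ring

end Moebius

theorem N_asymptotic_first_case (x1 x2 y1 y2 : ℝ)
    (hx1 : 0 < x1) (hx1' : x1 ≤ 1)
    (hx2 : 0 < x2) (hx2' : x2 ≤ 1) (hy1 : 0 < y1) (hy1' : y1 ≤ 1)
    (hy2 : 0 < y2) (hy2' : y2 ≤ 1) (hcase : x2 ≤ y1 * y2) :
    ∃ C : ℝ, 0 < C ∧ ∀ R : ℝ, 2 ≤ R →
      |NN x1 x2 y1 y2 R -
        2 / (π ^ 2 / 6) *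
          (Real.log (1 + x1 * x2) * Real.log (y1 * y2 / x2) - Li2 (-(x1 * x2)))| ≤
        C * x1 * Real.log R / R := by
  set A := Real.log (1 + x1 * x2) * Real.log (y1 * y2 / x2) - Li2 (-(x1 * x2))
  refine ⟨18 + 8 * |A| / (y1 * x1), by positivity, fun R hR => ?_⟩
  have hR0 : 0 < R := by linarith
  set D := ⌊y1 * R⌋₊
  have hlog : 1 ≤ 2 * Real.log R := by
    have := Real.log_le_log two_pos hR
    linarith [Real.log_two_gt_d9]
  have hDle : (D : ℝ) ≤ y1 * R := Nat.floor_le (by positivity)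
  have hDlt : y1 * R < D + 1 := Nat.lt_floor_add_one _
  set c : ℕ → ℝ := fun d => (ArithmeticFunction.moebius d : ℝ) / (d : ℝ) ^ 2
  set S : ℕ → ℝ := fun d => ∑' p, latticeTerm x1 x2 y1 y2 (R / d) p
  have hsplit : NN x1 x2 y1 y2 R - 2 / (π ^ 2 / 6) * A =
      2 * (∑ d ∈ Finset.Icc 1 D, c d * (S d - A) +
        (∑ d ∈ Finset.Icc 1 D, c d - 1 / (π ^ 2 / 6)) * A) := by
    rw [NN_eq_sum_moebius hx1.le]
    simp only [mul_sub, Finset.sum_sub_distrib, ← Finset.sum_mul]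
    ring
  have hmain : |∑ d ∈ Finset.Icc 1 D, c d * (S d - A)| ≤ 3 * x1 / R * (1 + Real.log R) := by
    have hterm : ∀ d ∈ Finset.Icc 1 D, |c d * (S d - A)| ≤ 3 * x1 / R * (d : ℝ)⁻¹ := by
      intro d hd
      rw [Finset.mem_Icc] at hd
      have hd0 : (0 : ℝ) < d := by exact_mod_cast hd.1
      have hdD : (d : ℝ) ≤ D := by exact_mod_cast hd.2
      have hr : 1 ≤ y1 * (R / d) := by
        rw [mul_div_assoc', one_le_div hd0]
        linarith
      have h1 := abs_tsum_latticeTerm_sub_le hx1 hx1' hx2 hx2' hy1 hy1' hy2 hy2' hcase hr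
      have h2 : |c d| ≤ 1 / (d : ℝ) ^ 2 := abs_moebius_div_sq_le d
      rw [abs_mul]
      calc |c d| * |S d - A| ≤ 1 / (d : ℝ) ^ 2 * (3 * x1 / (R / d)) := by gcongr
        _ = 3 * x1 / R * (d : ℝ)⁻¹ := by field_simp
    refine (Finset.abs_sum_le_sum_abs _ _).trans ((Finset.sum_le_sum hterm).trans ?_)
    rw [← Finset.mul_sum]
    refine mul_le_mul_of_nonneg_left ?_ (by positivity)
    have hharm : ∑ d ∈ Finset.Icc 1 D, (d : ℝ)⁻¹ = (harmonic D : ℝ) := by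
      rw [harmonic_eq_sum_Icc]
      push_cast
      rfl
    rw [hharm]
    refine (harmonic_le_one_add_log D).trans ?_
    rcases Nat.eq_zero_or_pos D with h0 | h0
    · rw [h0, Nat.cast_zero, Real.log_zero]
      linarith
    · have : (D : ℝ) ≤ R := hDle.trans (by nlinarith)
      gcongr
  have htail : |∑ d ∈ Finset.Icc 1 D, c d - 1 / (π ^ 2 / 6)| ≤ 2 / (y1 * R) :=
    (abs_sum_moebius_div_sq_sub_le D).trans (by gcongr)
  rw [hsplit, abs_mul, abs_two]
  calc 2 * |∑ d ∈ Finset.Icc 1 D, c d * (S d - A) +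
        (∑ d ∈ Finset.Icc 1 D, c d - 1 / (π ^ 2 / 6)) * A|
      ≤ 2 * (3 * x1 / R * (1 + Real.log R) + 2 / (y1 * R) * |A|) := by
        gcongr
        refine (abs_add_le _ _).trans (add_le_add hmain ?_)
        rw [abs_mul]
        gcongr
    _ ≤ 2 * (3 * x1 / R * (2 * Real.log R + Real.log R) +
          2 / (y1 * R) * |A| * (2 * Real.log R)) := by
        refine mul_le_mul_of_nonneg_left (add_le_add ?_ ?_) two_pos.le
        · gcongr
        · exact le_mul_of_one_le_right (by positivity) hlog
    _ = (18 + 8 * |A| / (y1 * x1)) * x1 * Real.log R / R := by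
        field_simp
        ring
end
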